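/- The property of non-planarity is strong: for all graphs G and H, G ≡^Φₛ H if and only if both G and H are non-planar, or G = H, where Φ is the set of non-planar graphs. -/

import Mathlib

/-- Graphs are finite sets of edges, an edge being a 2-element subset of the
vertex type `V`. -/
abbrev EGraph (V : Type) [DecidableEq V] := Finset {e : Finset V // e.card = 2}

/-- The vertex set of a graph: all endpoints of its edges (no isolated vertices). -/
def EGraph.verts {V : Type} [DecidableEq V] (G : EGraph V) : Finset V :=
  G.sup (fun e => e.1)

/-- A graph is planar if it has a drawing in the plane: an injective placement
of its vertices together with, for each edge, a simple continuous arc joining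
the images of its endpoints, such that two distinct arcs meet only in the
images of common endpoints and no arc passes through the image of a vertex
other than its endpoints. -/
def EGraph.IsPlanar {V : Type} [DecidableEq V] (G : EGraph V) : Prop :=
  ∃ (pos : V → ℝ × ℝ) (arc : {e : Finset V // e.card = 2} → ℝ → ℝ × ℝ),
    Set.InjOn pos (EGraph.verts G : Set V) ∧
    (∀ e ∈ G, ContinuousOn (arc e) (Set.Icc 0 1) ∧
      Set.InjOn (arc e) (Set.Icc 0 1)) ∧
    (∀ e ∈ G, ∃ u v : V, u ≠ v ∧ e.1 = ({u, v} : Finset V) ∧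
      arc e 0 = pos u ∧ arc e 1 = pos v) ∧
    (∀ e ∈ G, ∀ f ∈ G, e ≠ f →
      arc e '' Set.Icc 0 1 ∩ arc f '' Set.Icc 0 1 ⊆
        pos '' ((e.1 ∩ f.1 : Finset V) : Set V)) ∧
    (∀ e ∈ G, ∀ w ∈ EGraph.verts G, pos w ∈ arc e '' Set.Icc 0 1 → w ∈ e.1)


namespace Str14

/-- polygonal chains -/
inductive CH : ℂ → ℂ → Set ℂ → Prop
  | single (a : ℂ) : CH a a {a}
  | cons {a b c : ℂ} {A : Set ℂ} : CH b c A → CH a c (segment ℝ a b ∪ A)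

/-- simple polygonal lines -/
inductive SPL : ℂ → ℂ → Set ℂ → Prop
  | single (a : ℂ) : SPL a a {a}
  | cons {a b c : ℂ} {A : Set ℂ} : SPL b c A → a ≠ b → segment ℝ a b ∩ A ⊆ {b} →
      SPL a c (segment ℝ a b ∪ A)

inductive Tame : Set ℂ → Prop
  | empty : Tame ∅
  | cons (a b : ℂ) {A : Set ℂ} : Tame A → Tame (segment ℝ a b ∪ A)

theorem Tame.union {A B : Set ℂ} (hA : Tame A) (hB : Tame B) : Tame (A ∪ B) := by
  induction hA with
  | empty => simpa
  | cons a b _ ih => rw [Set.union_assoc]; exact ih.cons a b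

theorem Tame.seg (a b : ℂ) : Tame (segment ℝ a b) := by
  simpa using Tame.empty.cons a b

theorem Tame.biUnion {ι : Type*} {s : Set ι} (hs : s.Finite) {f : ι → Set ℂ}
    (h : ∀ i ∈ s, Tame (f i)) : Tame (⋃ i ∈ s, f i) := by
  induction s, hs using Set.Finite.induction_on with
  | empty => simpa using Tame.empty
  | insert _ _ ih =>
    rw [Set.biUnion_insert]
    exact (h _ (Set.mem_insert _ _)).union (ih fun i hi => h i (Set.mem_insert_of_mem _ hi))

theorem segment_compact (a b : ℂ) : IsCompact (segment ℝ a b) := by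
  rw [segment_eq_image_lineMap]
  exact isCompact_Icc.image (by fun_prop)

theorem Tame.isCompact {A : Set ℂ} (hA : Tame A) : IsCompact A := by
  induction hA with
  | empty => exact isCompact_empty
  | cons a b _ ih => exact (segment_compact a b).union ih

theorem CH.left_mem {a b : ℂ} {A : Set ℂ} (h : CH a b A) : a ∈ A := by
  cases h with
  | single => simp
  | cons => exact Or.inl (left_mem_segment ℝ _ _)

theorem CH.trans {a b c : ℂ} {A B : Set ℂ} (h : CH a b A) (h' : CH b c B) :
    CH a c (A ∪ B) := by
  induction h with
  | single a =>
    have : ({a} : Set ℂ) ∪ B = B := by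
      rw [Set.union_eq_right]; simpa using h'.left_mem
    rwa [this]
  | cons _ ih => rw [Set.union_assoc]; exact (ih h').cons

theorem CH.seg (a b : ℂ) : CH a b (segment ℝ a b) := by
  have := (CH.single b).cons (a := a)
  rwa [Set.union_eq_left.2] at this
  simpa using right_mem_segment ℝ a b

theorem CH.symm {a b : ℂ} {A : Set ℂ} (h : CH a b A) : CH b a A := by
  induction h with
  | single a => exact .single a
  | cons _ ih =>
    rw [Set.union_comm, segment_symm]
    exact ih.trans (CH.seg _ _)

theorem SPL.left_mem {a b : ℂ} {A : Set ℂ} (h : SPL a b A) : a ∈ A := by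
  cases h with
  | single => simp
  | cons => exact Or.inl (left_mem_segment ℝ _ _)

theorem SPL.right_mem {a b : ℂ} {A : Set ℂ} (h : SPL a b A) : b ∈ A := by
  induction h with
  | single => simp
  | cons _ _ _ ih => exact Or.inr ih

theorem SPL.toCH {a b : ℂ} {A : Set ℂ} (h : SPL a b A) : CH a b A := by
  induction h with
  | single => exact .single _
  | cons _ _ _ ih => exact ih.cons

theorem SPL.tame {a b : ℂ} {A : Set ℂ} (h : SPL a b A) : Tame A := by
  induction h with
  | single a => simpa using Tame.seg a a
  | cons _ _ _ ih => exact ih.cons _ _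

theorem SPL.isCompact {a b : ℂ} {A : Set ℂ} (h : SPL a b A) : IsCompact A := h.tame.isCompact

theorem SPL.isPreconnected {a b : ℂ} {A : Set ℂ} (h : SPL a b A) : IsPreconnected A := by
  induction h with
  | single a => exact isPreconnected_singleton
  | cons h _ _ ih =>
    exact (convex_segment _ _).isPreconnected.union _ (right_mem_segment ℝ _ _) h.left_mem ih

theorem SPL.seg {a b : ℂ} (h : a ≠ b) : SPL a b (segment ℝ a b) := by
  have := (SPL.single b).cons (a := a) h Set.inter_subset_right
  rwa [Set.union_eq_left.2] at this
  simpa using right_mem_segment ℝ a b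

theorem SPL.trans {a b c : ℂ} {A B : Set ℂ} (h : SPL a b A) (h' : SPL b c B)
    (hAB : A ∩ B ⊆ {b}) : SPL a c (A ∪ B) := by
  induction h with
  | single a =>
    have : ({a} : Set ℂ) ∪ B = B := by
      rw [Set.union_eq_right]; simpa using h'.left_mem
    rwa [this]
  | @cons a b' c' A' h1 h2 h3 ih =>
    rw [Set.union_assoc]
    refine (ih h' ?_).cons h2 ?_
    · exact fun x hx => hAB ⟨Or.inr hx.1, hx.2⟩
    · rintro x ⟨hx, hx' | hx'⟩
      · exact h3 ⟨hx, hx'⟩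
      · have : x = c' := hAB ⟨Or.inl hx, hx'⟩
        subst this
        exact h3 ⟨hx, h1.right_mem⟩

theorem SPL.symm {a b : ℂ} {A : Set ℂ} (h : SPL a b A) : SPL b a A := by
  induction h with
  | single a => exact .single a
  | @cons a b c A h1 h2 h3 ih =>
    rw [Set.union_comm, segment_symm]
    refine ih.trans (SPL.seg h2.symm) ?_
    rw [segment_symm, Set.inter_comm]; exact h3

theorem SPL.cut {a b : ℂ} {A : Set ℂ} (h : SPL a b A) {p : ℂ} (hp : p ∈ A) :
    ∃ B ⊆ A, SPL p b B := by
  induction h with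
  | single a => exact ⟨{a}, subset_rfl, by rw [Set.mem_singleton_iff.1 hp]; exact .single a⟩
  | @cons a b c A h1 h2 h3 ih =>
    by_cases hpA : p ∈ A
    · obtain ⟨B, hB, h⟩ := ih hpA
      exact ⟨B, hB.trans Set.subset_union_right, h⟩
    · have hp' : p ∈ segment ℝ a b := hp.resolve_right hpA
      have hsub : segment ℝ p b ⊆ segment ℝ a b :=
        (convex_segment a b).segment_subset hp' (right_mem_segment ℝ a b)
      refine ⟨segment ℝ p b ∪ A, Set.union_subset_union_left _ hsub, h1.cons ?_ ?_⟩
      · rintro rfl; exact hpA h1.left_mem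
      · exact fun x hx => h3 ⟨hsub hx.1, hx.2⟩

theorem first_hit (d c : ℂ) {A : Set ℂ} (hA : IsCompact A) (hc : c ∈ A) :
    ∃ p ∈ A, p ∈ segment ℝ d c ∧ segment ℝ d p ∩ A ⊆ {p} := by
  let T := {t : ℝ | t ∈ Set.Icc (0:ℝ) 1 ∧ AffineMap.lineMap d c t ∈ A}
  have hT : IsCompact T := by
    refine isCompact_Icc.inter_right (t := {t : ℝ | AffineMap.lineMap d c t ∈ A}) ?_
    exact hA.isClosed.preimage (f := fun t : ℝ => (AffineMap.lineMap d c t : ℂ)) (by fun_prop)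
  obtain ⟨t, ht, hmin⟩ := hT.exists_isLeast ⟨1, by simp [T, hc]⟩
  refine ⟨AffineMap.lineMap d c t, ht.2, ?_, ?_⟩
  · rw [segment_eq_image_lineMap]; exact ⟨t, ht.1, rfl⟩
  · rintro x ⟨hx, hxA⟩
    rw [segment_eq_image_lineMap] at hx
    obtain ⟨s, hs, rfl⟩ := hx
    have e : (AffineMap.lineMap d (AffineMap.lineMap d c t : ℂ) s : ℂ) =
        AffineMap.lineMap d c (s * t) := by
      simp [AffineMap.lineMap_apply]; ring
    rw [e] at hxA ⊢
    have h1 : s * t ≤ t := mul_le_of_le_one_left ht.1.1 hs.2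
    have h2 : t ≤ s * t := hmin ⟨⟨mul_nonneg hs.1 ht.1.1, h1.trans ht.1.2⟩, hxA⟩
    rw [le_antisymm h1 h2]; rfl

theorem CH.extract {a b : ℂ} {A : Set ℂ} (h : CH a b A) : ∃ B ⊆ A, SPL a b B := by
  induction h with
  | single a => exact ⟨{a}, subset_rfl, .single a⟩
  | @cons a b c A h ih =>
    obtain ⟨B, hB, hs⟩ := ih
    obtain ⟨p, hpB, hp, hh⟩ := first_hit a b hs.isCompact hs.left_mem
    obtain ⟨C, hC, hs'⟩ := hs.cut hpB
    by_cases hap : a = p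
    · subst hap
      exact ⟨C, (hC.trans hB).trans Set.subset_union_right, hs'⟩
    · refine ⟨segment ℝ a p ∪ C, Set.union_subset_union ?_ (hC.trans hB), hs'.cons hap ?_⟩
      · exact (convex_segment a b).segment_subset (left_mem_segment ℝ _ _) hp
      · exact fun x hx => hh ⟨hx.1, hC hx.2⟩

theorem segment_diff_left {a b : ℂ} : Convex ℝ (segment ℝ a b \ {a}) := by
  by_cases hab : a = b
  · subst hab; simp [convex_empty]
  have : segment ℝ a b \ {a} = (fun t : ℝ => (AffineMap.lineMap a b t : ℂ)) '' Set.Ioc 0 1 := by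
    rw [segment_eq_image_lineMap]
    ext x; constructor
    · rintro ⟨⟨t, ht, rfl⟩, h⟩
      refine ⟨t, ⟨lt_of_le_of_ne ht.1 ?_, ht.2⟩, rfl⟩
      rintro rfl; simp at h
    · rintro ⟨t, ht, rfl⟩
      refine ⟨⟨t, ⟨ht.1.le, ht.2⟩, rfl⟩, ?_⟩
      simp only [Set.mem_singleton_iff, AffineMap.lineMap_eq_left_iff]
      rintro (h | h)
      · exact hab h
      · exact ht.1.ne' h
  rw [this]
  exact (convex_Ioc 0 1).affine_image (AffineMap.lineMap a b : ℝ →ᵃ[ℝ] ℂ)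

/-- destruct a nontrivial simple line -/
theorem SPL.destruct {a c : ℂ} {A : Set ℂ} (h : SPL a c A) (hac : a ≠ c) :
    ∃ b B, a ≠ b ∧ SPL b c B ∧ segment ℝ a b ∩ B ⊆ {b} ∧ A = segment ℝ a b ∪ B ∧ a ∉ B := by
  cases h with
  | single => exact absurd rfl hac
  | @cons _ b _ B h1 h2 h3 =>
    exact ⟨b, B, h2, h1, h3, rfl, fun h => h2 (h3 ⟨left_mem_segment ℝ _ _, h⟩)⟩

theorem SPL.diff_preconnected {a c : ℂ} {A : Set ℂ} (h : SPL a c A) (hac : a ≠ c) :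
    IsPreconnected (A \ {a}) := by
  obtain ⟨b, B, hab, hB, hi, rfl, haB⟩ := h.destruct hac
  have : (segment ℝ a b ∪ B) \ {a} = (segment ℝ a b \ {a}) ∪ B := by
    rw [Set.union_sdiff_distrib]; congr 1
    exact Set.sdiff_singleton_eq_self haB
  rw [this]
  exact segment_diff_left.isPreconnected.union b ⟨right_mem_segment ℝ _ _, hab.symm⟩ hB.left_mem
    hB.isPreconnected

end Str14


namespace Str14
open Filter Topology

theorem ray_near {p b c : ℂ} (hpb : p ≠ b) (h : segment ℝ p b ∩ segment ℝ b c ⊆ {b}) :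
    ∀ᶠ s in 𝓝 p, segment ℝ s b ∩ segment ℝ b c ⊆ {b} := by
  by_cases hcb : c = b
  · subst hcb
    refine Eventually.of_forall fun s x hx => ?_
    simpa using hx.2
  have hcb' : c - b ≠ 0 := sub_ne_zero.2 hcb
  let R : Set ℂ := {w | ((w - b) / (c - b)).im = 0 ∧ 0 ≤ ((w - b) / (c - b)).re}
  have hR : IsClosed R := by
    have hc : Continuous fun w : ℂ => (w - b) / (c - b) := by fun_prop
    exact (isClosed_eq (Complex.continuous_im.comp hc) continuous_const).inter
      (isClosed_le continuous_const (Complex.continuous_re.comp hc))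
  have hRmem : ∀ w, w ∈ R ↔ ∃ t : ℝ, 0 ≤ t ∧ w = b + t * (c - b) := by
    intro w; constructor
    · rintro ⟨h1, h2⟩
      refine ⟨_, h2, ?_⟩
      have : (((w - b) / (c - b)).re : ℂ) = (w - b) / (c - b) := by
        apply Complex.ext <;> simp [h1]
      rw [this]; field_simp; ring
    · rintro ⟨t, ht, rfl⟩
      have : (b + t * (c - b) - b) / (c - b) = (t : ℂ) := by field_simp; ring
      simp only [R, Set.mem_ofPred_eq, this]; simpa using ht
  have hp : p ∉ R := by
    rw [hRmem]
    rintro ⟨t, ht, hpt⟩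
    have ht0 : t ≠ 0 := by rintro rfl; simp at hpt; exact hpb hpt
    rcases le_total t 1 with h1 | h1
    · apply hpb
      refine h ⟨left_mem_segment ℝ _ _, ?_⟩
      rw [segment_eq_image']
      exact ⟨t, ⟨ht, h1⟩, by simp [hpt]⟩
    · apply hcb
      refine h ⟨?_, right_mem_segment ℝ _ _⟩
      rw [segment_symm, segment_eq_image']
      refine ⟨t⁻¹, ⟨by positivity, inv_le_one_of_one_le₀ h1⟩, ?_⟩
      simp only [hpt, Complex.real_smul]
      have : (t : ℂ) ≠ 0 := by exact_mod_cast ht0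
      push_cast; field_simp; ring
  filter_upwards [hR.isOpen_compl.mem_nhds hp] with s hs
  rintro x ⟨hx1, hx2⟩
  by_contra hxb
  rw [segment_symm, segment_eq_image'] at hx1
  rw [segment_eq_image'] at hx2
  obtain ⟨l, hl, rfl⟩ := hx1
  obtain ⟨m, hm, hx⟩ := hx2
  simp only [Complex.real_smul, add_right_inj, Set.mem_singleton_iff] at hx hxb
  have hl0 : l ≠ 0 := by rintro rfl; simp at hxb
  have hl0' : (l : ℂ) ≠ 0 := by exact_mod_cast hl0
  apply hs
  rw [hRmem]
  refine ⟨m / l, div_nonneg hm.1 hl.1, ?_⟩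
  push_cast
  rw [div_mul_eq_mul_div, hx]; field_simp; ring

theorem seg_split {b c d y : ℂ} (hb : b ∈ segment ℝ c d) (hy : y ∈ segment ℝ c d) :
    y ∈ segment ℝ b c ∪ segment ℝ b d := by
  rw [segment_eq_image_lineMap] at hb hy
  obtain ⟨t, ht, rfl⟩ := hb
  obtain ⟨s, hs, rfl⟩ := hy
  have h : ∀ r, s ∈ segment ℝ t r → (AffineMap.lineMap c d s : ℂ) ∈
      segment ℝ (AffineMap.lineMap c d t : ℂ) (AffineMap.lineMap c d r) := by
    intro r hr
    rw [← image_segment ℝ (AffineMap.lineMap c d : ℝ →ᵃ[ℝ] ℂ)]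
    exact ⟨s, hr, rfl⟩
  rcases le_total s t with hst | hst
  · left
    have := h 0 (by rw [segment_symm, segment_eq_Icc ht.1]; exact ⟨hs.1, hst⟩)
    simpa using this
  · right
    have := h 1 (by rw [segment_eq_Icc ht.2]; exact ⟨hst, hs.2⟩)
    simpa using this

theorem seg_near {p b : ℂ} {D : Set ℂ} (hD : Tame D) (hpb : p ≠ b)
    (h : segment ℝ p b ∩ D ⊆ {b}) :
    ∀ᶠ s in 𝓝 p, segment ℝ s b ∩ D ⊆ {b} := by
  induction hD with
  | empty => simp
  | @cons c d A hA ih =>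
    have h1 := ih (fun x hx => h ⟨hx.1, Or.inr hx.2⟩)
    suffices h2 : ∀ᶠ s in 𝓝 p, segment ℝ s b ∩ segment ℝ c d ⊆ {b} by
      filter_upwards [h1, h2] with s h1 h2
      rintro x ⟨hx, hx' | hx'⟩
      · exact h2 ⟨hx, hx'⟩
      · exact h1 ⟨hx, hx'⟩
    have h0 : segment ℝ p b ∩ segment ℝ c d ⊆ {b} := fun x hx => h ⟨hx.1, Or.inl hx.2⟩
    by_cases hb : b ∈ segment ℝ c d
    · have e : ∀ y ∈ segment ℝ c d, y ∈ segment ℝ b c ∪ segment ℝ b d := by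
        exact fun y hy => seg_split hb hy
      have hsub1 : segment ℝ b c ⊆ segment ℝ c d :=
        (convex_segment c d).segment_subset hb (left_mem_segment ℝ _ _)
      have hsub2 : segment ℝ b d ⊆ segment ℝ c d :=
        (convex_segment c d).segment_subset hb (right_mem_segment ℝ _ _)
      filter_upwards [ray_near hpb (fun x hx => h0 ⟨hx.1, hsub1 hx.2⟩),
        ray_near hpb (fun x hx => h0 ⟨hx.1, hsub2 hx.2⟩)] with s h1 h2
      rintro x ⟨hx, hx'⟩
      rcases e x hx' with h | h
      · exact h1 ⟨hx, h⟩
      · exact h2 ⟨hx, h⟩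
    · have hdis : Disjoint (segment ℝ p b) (segment ℝ c d) := by
        rw [Set.disjoint_left]
        intro x hx hx'
        have : x = b := h0 ⟨hx, hx'⟩
        exact hb (this ▸ hx')
      obtain ⟨δ, hδ, hdis⟩ := hdis.exists_thickenings (segment_compact _ _) (segment_compact _ _).isClosed
      filter_upwards [Metric.ball_mem_nhds p hδ] with s hs
      rintro x ⟨hx, hx'⟩
      exfalso
      refine Set.disjoint_left.1 hdis ?_ (Metric.self_subset_thickening hδ _ hx')
      obtain ⟨α, β, hα, hβ, hαβ, rfl⟩ := hx
      rw [Metric.mem_thickening_iff]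
      refine ⟨α • p + β • b, ⟨α, β, hα, hβ, hαβ, rfl⟩, ?_⟩
      rw [dist_add_right, dist_smul₀]
      have : ‖α‖ ≤ 1 := by rw [Real.norm_eq_abs, abs_of_nonneg hα]; linarith
      exact lt_of_le_of_lt (mul_le_of_le_one_left dist_nonneg this) hs

/-- half open cone -/
def Cone (x d : ℂ) : Set ℂ := {w | ∃ α β : ℝ, 0 ≤ α ∧ 0 < β ∧ w = α * x + β * d}

def Good (N : Set ℂ) (b q d : ℂ) : Prop :=
  0 ∉ Cone b d ∧ 0 ∉ Cone q d ∧ ∀ n ∈ N, n ∉ Cone b d ∧ n ∉ Cone q d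

theorem cone_seg {p b d n : ℂ} {ε : ℝ} (hε : 0 < ε) (h0 : 0 ∉ Cone (b - p) d)
    (hn : n - p ∉ Cone (b - p) d) : segment ℝ (p + ε * d) b ∩ segment ℝ p n ⊆ {b} := by
  rintro x ⟨⟨α, β, hα, hβ, hαβ, rfl⟩, hx⟩
  rw [segment_eq_image'] at hx
  obtain ⟨t, ht, hx⟩ := hx
  simp only [Complex.real_smul] at hx ⊢
  rcases hα.eq_or_lt with rfl | hα
  · have : β = 1 := by linarith
    subst this; simp
  exfalso
  have hβ' : (α : ℂ) = 1 - β := by rw [eq_sub_iff_add_eq]; exact_mod_cast hαβ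
  have key : t * (n - p) = β * (b - p) + ((α * ε : ℝ) : ℂ) * d := by
    have : (t : ℂ) * (n - p) = p + t * (n - p) - p := by ring
    rw [this, hx]; push_cast; rw [hβ']; ring
  rcases ht.1.eq_or_lt with rfl | ht0
  · apply h0
    refine ⟨β, α * ε, hβ, by positivity, ?_⟩
    rw [← key]; simp
  · apply hn
    refine ⟨β / t, α * ε / t, by positivity, by positivity, ?_⟩
    have ht0' : (t : ℂ) ≠ 0 := by exact_mod_cast ht0.ne'
    push_cast at key ⊢
    field_simp
    linear_combination key

theorem turn {D : Set ℂ} (hD : Tame D) {p z b d : ℂ} {N : Set ℂ} (hpb : p ≠ b) (hpz : p ≠ z)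
    (hb : segment ℝ p b ∩ D ⊆ {b}) (hz : segment ℝ p z ∩ D ⊆ {z}) (hbN : b ∈ N)
    (hg : Good ((fun n => n - p) '' N) (b - p) (z - p) d) :
    ∃ s, s ≠ b ∧ segment ℝ s b ∩ (D ∪ ⋃ n ∈ N, segment ℝ p n) ⊆ {b} ∧
      segment ℝ s z ∩ (D ∪ ⋃ n ∈ N, segment ℝ p n) ⊆ {z} := by
  have ht : Tendsto (fun ε : ℝ => p + ε * d) (𝓝[>] 0) (𝓝 p) := by
    have : Tendsto (fun ε : ℝ => p + ε * d) (𝓝 0) (𝓝 (p + (0:ℝ) * d)) :=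
      Continuous.tendsto (by fun_prop) 0
    simp only [Complex.ofReal_zero, zero_mul, add_zero] at this
    exact this.mono_left nhdsWithin_le_nhds
  obtain ⟨ε, h1, h2, hε⟩ := ((ht.eventually (seg_near hD hpb hb)).and
    ((ht.eventually (seg_near hD hpz hz)).and self_mem_nhdsWithin)).exists
  have hε : 0 < ε := hε
  refine ⟨p + ε * d, ?_, ?_, ?_⟩
  · intro h
    refine (hg.2.2 (b - p) ⟨b, hbN, rfl⟩).1 ⟨0, ε, le_rfl, hε, ?_⟩
    rw [← h]; push_cast; ring
  · rintro x ⟨hx, hx' | hx'⟩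
    · exact h1 ⟨hx, hx'⟩
    · simp only [Set.mem_iUnion] at hx'
      obtain ⟨n, hn, hx'⟩ := hx'
      exact cone_seg hε hg.1 (hg.2.2 _ ⟨n, hn, rfl⟩).1 ⟨hx, hx'⟩
  · rintro x ⟨hx, hx' | hx'⟩
    · exact h2 ⟨hx, hx'⟩
    · simp only [Set.mem_iUnion] at hx'
      obtain ⟨n, hn, hx'⟩ := hx'
      exact cone_seg hε hg.2.1 (hg.2.2 _ ⟨n, hn, rfl⟩).2 ⟨hx, hx'⟩

end Str14


namespace Str14
open Filter Topology

/-- angle in (0, 2π], with positive reals sent to 2π -/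
noncomputable def phi (w : ℂ) : ℝ := Complex.arg (-w) + Real.pi

theorem phi_pos (w : ℂ) : 0 < phi w := by
  have := Complex.neg_pi_lt_arg (-w); unfold phi; linarith

theorem phi_le (w : ℂ) : phi w ≤ 2 * Real.pi := by
  have := Complex.arg_le_pi (-w); unfold phi; linarith

theorem phi_eq {r t : ℝ} (hr : 0 < r) (ht : 0 < t) (ht' : t ≤ 2 * Real.pi) :
    phi (r * Complex.exp (t * Complex.I)) = t := by
  have : -(r * Complex.exp (t * Complex.I)) = r * Complex.exp (((t - Real.pi : ℝ) : ℂ) * Complex.I) := by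
    push_cast
    rw [sub_mul, Complex.exp_sub, Complex.exp_pi_mul_I]; ring
  unfold phi
  rw [this, Complex.arg_real_mul _ hr, Complex.arg_exp_mul_I, toIocMod_eq_self _ |>.2]
  · ring
  · constructor <;> linarith

theorem phi_polar {w : ℂ} : w = ‖w‖ * Complex.exp (phi w * Complex.I) := by
  have := Complex.norm_mul_exp_arg_mul_I (-w)
  rw [norm_neg] at this
  unfold phi
  push_cast
  rw [add_mul, Complex.exp_add, Complex.exp_pi_mul_I]
  linear_combination this

theorem phi_lt_of {w : ℂ} (h : ¬ SameRay ℝ w 1) : phi w < 2 * Real.pi := by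
  refine lt_of_le_of_ne (phi_le w) fun h' => h ?_
  have := @phi_polar w
  rw [h'] at this
  push_cast at this
  rw [Complex.exp_two_pi_mul_I, mul_one] at this
  rw [this]
  have h1 : ((‖w‖ : ℝ) : ℂ) = (‖w‖ : ℝ) • (1 : ℂ) := by simp
  rw [h1]
  exact SameRay.sameRay_nonneg_smul_left 1 (norm_nonneg w)

theorem phi_inj {w w' : ℂ} (h : phi w = phi w') : SameRay ℝ w w' := by
  unfold phi at h
  have := Complex.sameRay_of_arg_eq (x := -w) (y := -w') (by linarith)
  simpa using this

/-- positive combos -/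
theorem phi_combo {τ α β : ℝ} (h0 : 0 < τ) (h1 : τ < Real.pi) (hα : 0 ≤ α) (hβ : 0 ≤ β)
    (hαβ : 0 < α ∨ 0 < β) :
    ∃ r η : ℝ, 0 < r ∧ 0 ≤ η ∧ η ≤ τ ∧ (0 < α → η < τ) ∧ (0 < β → 0 < η) ∧
      (α + β * Complex.exp (τ * Complex.I)) = r * Complex.exp (η * Complex.I) := by
  set y : ℂ := α + β * Complex.exp (τ * Complex.I) with hy
  have hs : 0 < Real.sin τ := Real.sin_pos_of_pos_of_lt_pi h0 h1
  have hre : y.re = α + β * Real.cos τ := by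
    simp [hy, Complex.exp_ofReal_mul_I_re, Complex.exp_ofReal_mul_I_im]
  have him : y.im = β * Real.sin τ := by
    simp [hy, Complex.exp_ofReal_mul_I_re, Complex.exp_ofReal_mul_I_im]
  have hy0 : y ≠ 0 := by
    intro h
    rw [h] at hre him
    simp at hre him
    rcases him with h | h
    · subst h; simp at hre; subst hre; simp at hαβ
    · exact hs.ne' h
  have hr : 0 < ‖y‖ := norm_pos_iff.2 hy0
  have hc := Complex.norm_mul_cos_arg y
  have hsn := Complex.norm_mul_sin_arg y
  have hη0 : 0 ≤ y.arg := by
    rw [Complex.arg_nonneg_iff, him]; positivity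
  have hηπ : y.arg < Real.pi := by
    refine lt_of_le_of_ne (Complex.arg_le_pi y) fun h => ?_
    rw [Complex.arg_eq_pi_iff] at h
    rw [him] at h
    have hβ0 : β = 0 := by
      rcases mul_eq_zero.1 h.2 with h | h
      · exact h
      · exact absurd h hs.ne'
    rw [hre, hβ0] at h
    linarith [h.1]
  have key : ‖y‖ * Real.sin (τ - y.arg) = α * Real.sin τ := by
    rw [Real.sin_sub]
    have : ‖y‖ * (Real.sin τ * Real.cos y.arg - Real.cos τ * Real.sin y.arg) =
      Real.sin τ * (‖y‖ * Real.cos y.arg) - Real.cos τ * (‖y‖ * Real.sin y.arg) := by ring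
    rw [this, hc, hsn, hre, him]; ring
  refine ⟨‖y‖, y.arg, hr, hη0, ?_, ?_, ?_, (Complex.norm_mul_exp_arg_mul_I y).symm⟩
  · by_contra hlt
    push Not at hlt
    have := Real.sin_neg_of_neg_of_neg_pi_lt (x := τ - y.arg) (by linarith) (by linarith)
    have h2 : 0 ≤ α * Real.sin τ := by positivity
    nlinarith
  · intro hα'
    by_contra hlt
    push Not at hlt
    have := Real.sin_nonpos_of_nonpos_of_neg_pi_le (x := τ - y.arg) (by linarith) (by linarith)
    have h2 : 0 < α * Real.sin τ := by positivity
    nlinarith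
  · intro hβ'
    refine lt_of_le_of_ne hη0 fun h => ?_
    rw [← h] at hsn
    rw [him] at hsn
    have h2 : 0 < β * Real.sin τ := by positivity
    simp at hsn
    rcases hsn with h | h
    · linarith
    · linarith

theorem good_min {N : Set ℂ} {b q : ℂ} (hq : q ≠ 0) (hb : b ≠ 0) (hbq : ¬ SameRay ℝ b q)
    (hmin : ∀ n ∈ N, n ≠ 0 → phi (b / q) ≤ phi (n / q)) (hN : ∀ n ∈ N, n ≠ 0) :
    ∃ d, Good N b q d := by
  set θ := phi (b / q) with hθ
  have hθ0 : 0 < θ := phi_pos _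
  have hθ1 : θ < 2 * Real.pi := by
    apply phi_lt_of
    intro h
    apply hbq
    obtain ⟨r, hr, h⟩ := h.exists_nonneg_right (one_ne_zero)
    have : b = r • q := by
      rw [div_eq_iff hq] at h; rw [h]; simp
    rw [this]
    exact SameRay.sameRay_nonneg_smul_left q hr
  have hbp : b / q = ‖b / q‖ * Complex.exp (θ * Complex.I) := phi_polar
  set ρ := ‖b / q‖ with hρ
  have hρ0 : 0 < ρ := norm_pos_iff.2 (div_ne_zero hb hq)
  have hE : Complex.exp (θ * Complex.I) =
      Complex.exp (((θ / 2 : ℝ) : ℂ) * Complex.I) * Complex.exp (((θ / 2 : ℝ) : ℂ) * Complex.I) := by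
    rw [← Complex.exp_add]; congr 1; push_cast; ring
  set E := Complex.exp (((θ / 2 : ℝ) : ℂ) * Complex.I) with hEdef
  have c1 : ∀ w ∈ Cone b (q * E), w ≠ 0 ∧ phi (w / q) < θ := by
    rintro w ⟨α, β, hα, hβ, rfl⟩
    obtain ⟨r, η, hr, hη0, hη1, h3, h4, hy⟩ := phi_combo (τ := θ / 2) (α := β) (β := α * ρ)
      (by linarith) (by linarith) hβ.le (by positivity) (Or.inl hβ)
    have hw : (α * b + β * (q * E)) / q = r * Complex.exp (((θ / 2 + η : ℝ) : ℂ) * Complex.I) := by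
      rw [← hEdef] at hy
      have h1 : (α * b + β * (q * E)) / q = α * (b / q) + β * E := by field_simp
      rw [h1, hbp, hE, Complex.ofReal_add, add_mul, Complex.exp_add, ← hEdef]
      push_cast at hy
      linear_combination E * hy
    have h3' := h3 hβ
    constructor
    · intro h0
      rw [h0, zero_div] at hw
      have := mul_ne_zero (Complex.ofReal_ne_zero.2 hr.ne') (Complex.exp_ne_zero (((θ / 2 + η : ℝ) : ℂ) * Complex.I))
      exact this hw.symm
    · rw [hw, phi_eq hr (by linarith) (by linarith)]; linarith
  have c2 : ∀ w ∈ Cone q (q * E), w ≠ 0 ∧ phi (w / q) < θ := by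
    rintro w ⟨α, β, hα, hβ, rfl⟩
    obtain ⟨r, η, hr, hη0, hη1, h3, h4, hy⟩ := phi_combo (τ := θ / 2) (α := α) (β := β)
      (by linarith) (by linarith) hα hβ.le (Or.inr hβ)
    have hw : (α * q + β * (q * E)) / q = r * Complex.exp (η * Complex.I) := by
      rw [← hy, ← hEdef]; field_simp
    have h4' := h4 hβ
    constructor
    · intro h0
      rw [h0, zero_div] at hw
      have := mul_ne_zero (Complex.ofReal_ne_zero.2 hr.ne') (Complex.exp_ne_zero (η * Complex.I))
      exact this hw.symm
    · rw [hw, phi_eq hr h4' (by linarith)]; linarith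
  refine ⟨q * E, fun h => (c1 0 h).1 rfl, fun h => (c2 0 h).1 rfl, fun n hn => ⟨fun h => ?_, fun h => ?_⟩⟩
  · exact absurd (hmin n hn (hN n hn)) (not_le.2 (c1 n h).2)
  · exact absurd (hmin n hn (hN n hn)) (not_le.2 (c2 n h).2)

open ComplexConjugate in
theorem cone_conj {x d w : ℂ} (h : w ∈ Cone x d) : conj w ∈ Cone (conj x) (conj d) := by
  obtain ⟨α, β, h1, h2, rfl⟩ := h
  exact ⟨α, β, h1, h2, by simp⟩

open ComplexConjugate in
theorem good_conj {N : Set ℂ} {b q d : ℂ} (h : Good (conj '' N) (conj b) (conj q) d) :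
    Good N b q (conj d) := by
  refine ⟨fun h' => h.1 ?_, fun h' => h.2.1 ?_, fun n hn => ⟨fun h' => (h.2.2 (conj n) ⟨n, hn, rfl⟩).1 ?_,
    fun h' => (h.2.2 (conj n) ⟨n, hn, rfl⟩).2 ?_⟩⟩ <;> simpa using cone_conj h'

open ComplexConjugate in
theorem sector {N : Set ℂ} (hfin : N.Finite) {q : ℂ} (hqN : q ∈ N) (hN : ∀ n ∈ N, n ≠ 0)
    (hray : ∀ n ∈ N, ∀ m ∈ N, SameRay ℝ n m → n = m)
    {m₁ m₂ : ℂ} (h1 : m₁ ∈ N) (h2 : m₂ ∈ N) (h12 : m₁ ≠ m₂) (h1q : m₁ ≠ q) (h2q : m₂ ≠ q) :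
    ∃ b ∈ N, ∃ b' ∈ N, b ≠ q ∧ b' ≠ q ∧ b ≠ b' ∧ (∃ d, Good N b q d) ∧ (∃ d, Good N b' q d) := by
  have hq := hN q hqN
  have hfin' : (N \ {q}).Finite := hfin.subset Set.sdiff_subset
  obtain ⟨b, hb, hbmin⟩ := Set.exists_min_image (N \ {q}) (fun n => phi (n / q)) hfin' ⟨m₁, h1, h1q⟩
  obtain ⟨c, hc, hcmin⟩ := Set.exists_min_image (N \ {q}) (fun n => phi (conj (n / q))) hfin' ⟨m₁, h1, h1q⟩
  have hnr : ∀ n ∈ N \ {q}, ¬ SameRay ℝ n q := fun n hn h => hn.2 (hray n hn.1 q hqN h)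
  have hdivray : ∀ n m, SameRay ℝ (n / q) (m / q) → SameRay ℝ n m := by
    intro n m h
    have := h.map (LinearMap.mulLeft ℝ q)
    simpa [mul_div_cancel₀, hq] using this
  have hphiq : phi (q / q) = 2 * Real.pi := by
    rw [div_self hq]; unfold phi; rw [Complex.arg_neg_one]; ring
  have hphiq' : phi (conj (q / q)) = 2 * Real.pi := by
    rw [div_self hq]; unfold phi; rw [map_one, Complex.arg_neg_one]; ring
  refine ⟨b, hb.1, c, hc.1, hb.2, hc.2, ?_, ?_, ?_⟩
  · rintro rfl
    have hsum : ∀ n ∈ N \ {q}, phi (conj (n / q)) = 2 * Real.pi - phi (n / q) := by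
      intro n hn
      have hlt : phi (n / q) < 2 * Real.pi := by
        apply phi_lt_of
        intro h
        refine hnr n hn (hdivray _ _ ?_)
        rwa [div_self hq]
      unfold phi at hlt ⊢
      rw [← map_neg, Complex.arg_conj, if_neg]
      · ring
      · intro h; rw [h] at hlt; linarith
    have heq : ∀ n ∈ N \ {q}, n = b := by
      intro n hn
      have e1 := hbmin n hn
      have e2 := hcmin n hn
      rw [hsum n hn, hsum b hb] at e2
      exact hray _ hn.1 _ hb.1 (hdivray _ _ (phi_inj (by linarith)))
    exact h12 ((heq m₁ ⟨h1, h1q⟩).trans (heq m₂ ⟨h2, h2q⟩).symm)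
  · refine good_min hq (hN b hb.1) (hnr b hb) (fun n hn _ => ?_) hN
    by_cases h : n = q
    · rw [h, hphiq]; exact phi_le _
    · exact hbmin n ⟨hn, h⟩
  · have hq' : conj q ≠ 0 := by simpa using hq
    obtain ⟨d, hd⟩ := good_min (N := conj '' N) (b := conj c) (q := conj q) hq' (by simpa using hN c hc.1)
      (fun h => hnr c hc (by simpa using h.map (Complex.conjAe.toLinearMap))) (by
        rintro _ ⟨n, hn, rfl⟩ _
        rw [← map_div₀, ← map_div₀]
        by_cases h : n = q
        · rw [h, hphiq']; exact phi_le _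
        · exact hcmin n ⟨hn, h⟩) (by rintro _ ⟨n, hn, rfl⟩; simpa using hN n hn)
    exact ⟨_, good_conj hd⟩

end Str14


namespace Str14
open Filter Topology

theorem not_sameRay {p n m : ℂ} (hn : p ≠ n) (hm : p ≠ m)
    (h : segment ℝ p n ∩ segment ℝ p m ⊆ {p}) : ¬ SameRay ℝ (n - p) (m - p) := by
  intro hr
  obtain ⟨r, hr0, hr⟩ := hr.exists_pos_left (sub_ne_zero.2 hn.symm) (sub_ne_zero.2 hm.symm)
  rcases le_total r 1 with h1 | h1
  · apply hm
    refine (h ⟨?_, right_mem_segment ℝ _ _⟩).symm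
    rw [segment_eq_image']
    exact ⟨r, ⟨hr0.le, h1⟩, by simp only [hr]; ring⟩
  · apply hn
    refine (h ⟨right_mem_segment ℝ _ _, ?_⟩).symm
    rw [segment_eq_image']
    refine ⟨r⁻¹, ⟨by positivity, inv_le_one_of_one_le₀ h1⟩, ?_⟩
    simp only [← hr, smul_smul, inv_mul_cancel₀ hr0.ne', one_smul]; ring

theorem sector3 {p a b s : ℂ} (ha : p ≠ a) (hb : p ≠ b) (hs : p ≠ s)
    (hab : segment ℝ p a ∩ segment ℝ p b ⊆ {p}) (has : segment ℝ p a ∩ segment ℝ p s ⊆ {p})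
    (hbs : segment ℝ p b ∩ segment ℝ p s ⊆ {p}) :
    ∃ d, Good ((fun n => n - p) '' {a, b, s}) (b - p) (s - p) d := by
  have e1 := not_sameRay ha hb hab
  have e2 := not_sameRay ha hs has
  have e3 := not_sameRay hb hs hbs
  have n1 : a ≠ b := fun h => e1 (by rw [h])
  have n2 : a ≠ s := fun h => e2 (by rw [h])
  have n3 : b ≠ s := fun h => e3 (by rw [h])
  have e1' : ¬ SameRay ℝ (b - p) (a - p) := fun h => e1 h.symm
  have e2' : ¬ SameRay ℝ (s - p) (a - p) := fun h => e2 h.symm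
  have e3' : ¬ SameRay ℝ (s - p) (b - p) := fun h => e3 h.symm
  obtain ⟨c, hc, c', hc', h1, h2, h3, h4, h5⟩ := sector (N := (fun n => n - p) '' {a, b, s})
    ((Set.toFinite _).image _) (q := s - p) ⟨s, by simp, rfl⟩
    (by
      rintro _ ⟨n, hn, rfl⟩
      simp only [Set.mem_insert_iff, Set.mem_singleton_iff] at hn
      rcases hn with rfl | rfl | rfl <;> simp only [ne_eq, sub_eq_zero] <;> exact Ne.symm ‹_›)
    (by
      rintro _ ⟨n, hn, rfl⟩ _ ⟨m, hm, rfl⟩ hr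
      simp only [Set.mem_insert_iff, Set.mem_singleton_iff] at hn hm
      rcases hn with rfl | rfl | rfl <;> rcases hm with rfl | rfl | rfl <;>
        first | rfl | (exfalso; contradiction))
    (m₁ := a - p) (m₂ := b - p) ⟨a, by simp, rfl⟩ ⟨b, by simp, rfl⟩ (by simpa using n1)
    (by simpa using n2) (by simpa using n3)
  obtain ⟨n, hn, rfl⟩ := hc
  obtain ⟨m, hm, rfl⟩ := hc'
  simp only [Set.mem_insert_iff, Set.mem_singleton_iff] at hn hm
  rcases hn with rfl | rfl | rfl
  · rcases hm with rfl | rfl | rfl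
    · simp at h3
    · exact h5
    · simp at h2
  · exact h4
  · simp at h1

theorem walk {p x : ℂ} {A : Set ℂ} (h : SPL p x A) : ∀ (a s : ℂ) (D : Set ℂ), Tame D → a ≠ p → s ≠ p →
    segment ℝ a p ∩ A ⊆ {p} → D ∩ A ⊆ {x} → segment ℝ s p ∩ (segment ℝ a p ∪ A ∪ D) ⊆ {p} →
    ∃ C, CH s x C ∧ C ∩ (segment ℝ a p ∪ A ∪ D) ⊆ {x} := by
  induction h with
  | single p =>
    intro a s D hD ha hs h1 h2 h3
    exact ⟨_, CH.seg s p, h3⟩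
  | @cons p b x B hB hpb hi ih =>
    intro a s D hD ha hs h1 h2 h3
    have hpB : p ∉ B := fun h => hpb (hi ⟨left_mem_segment ℝ _ _, h⟩)
    have hpD : p ∉ D := fun h => hpB (by
      have : p = x := h2 ⟨h, Or.inl (left_mem_segment ℝ _ _)⟩
      rw [this]; exact hB.right_mem)
    have hsD : s ∉ segment ℝ a p ∪ (segment ℝ p b ∪ B) ∪ D := fun h =>
      hs (h3 ⟨left_mem_segment ℝ _ _, h⟩)
    obtain ⟨d, hd⟩ := sector3 (p := p) (a := a) (b := b) (s := s) ha.symm hpb hs.symm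
      (by
        intro y hy
        refine h1 ⟨by rw [segment_symm]; exact hy.1, Or.inl hy.2⟩)
      (by
        intro y hy
        refine h3 ⟨by rw [segment_symm]; exact hy.2, Or.inl (Or.inl ?_)⟩
        rw [segment_symm]; exact hy.1)
      (by
        intro y hy
        refine h3 ⟨by rw [segment_symm]; exact hy.2, Or.inl (Or.inr (Or.inl hy.1))⟩)
    obtain ⟨s', hs'b, hs1, hs2⟩ := turn (hB.tame.union hD) (p := p) (z := s) (b := b) hpb hs.symm
      (by
        rintro y ⟨hy, hy' | hy'⟩
        · exact hi ⟨hy, hy'⟩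
        · have : y = x := h2 ⟨hy', Or.inl hy⟩
          subst this
          exact hi ⟨hy, hB.right_mem⟩)
      (by
        rintro y ⟨hy, hy'⟩
        exfalso
        rw [segment_symm] at hy
        have : y = p := h3 ⟨hy, by
          rcases hy' with h | h
          · exact Or.inl (Or.inr (Or.inr h))
          · exact Or.inr h⟩
        subst this
        exact hy'.elim hpB hpD) (N := {a, b, s}) (by simp) hd
    have hsub : ∀ y, y ∈ segment ℝ a p ∪ (segment ℝ p b ∪ B) ∪ D →
        y ∈ (B ∪ D) ∪ ⋃ n ∈ ({a, b, s} : Set ℂ), segment ℝ p n := by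
      intro y hy
      simp only [Set.mem_insert_iff, Set.mem_singleton_iff, Set.iUnion_iUnion_eq_or_left,
        Set.iUnion_iUnion_eq_left, Set.mem_union]
      rw [segment_symm ℝ a p] at hy
      simp only [Set.mem_union] at hy
      tauto
    obtain ⟨C, hC, hC'⟩ := ih p s' (D ∪ segment ℝ a p) (hD.union (Tame.seg _ _)) hpb hs'b hi
      (by
        rintro y ⟨hy | hy, hy'⟩
        · exact h2 ⟨hy, Or.inr hy'⟩
        · have : y = p := h1 ⟨hy, Or.inr hy'⟩
          subst this; exact absurd hy' hpB)
      (by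
        rintro y ⟨hy, hy'⟩
        refine hs1 ⟨hy, hsub y ?_⟩
        simp only [Set.mem_union] at hy' ⊢
        tauto)
    refine ⟨segment ℝ s s' ∪ C, hC.cons, ?_⟩
    rintro y ⟨hy | hy, hy'⟩
    · exfalso
      rw [segment_symm] at hy
      have : y = s := hs2 ⟨hy, hsub y hy'⟩
      subst this
      exact hsD hy'
    · refine hC' ⟨hy, ?_⟩
      simp only [Set.mem_union] at hy' ⊢
      tauto

theorem SPL.destruct' {a c : ℂ} {A : Set ℂ} (h : SPL a c A) (hac : a ≠ c) :
    ∃ m B, a ≠ m ∧ c ∉ segment ℝ a m ∧ SPL m c B ∧ segment ℝ a m ∩ B ⊆ {m} ∧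
      A = segment ℝ a m ∪ B ∧ a ∉ B := by
  obtain ⟨b, B, hab, hB, hi, rfl, haB⟩ := h.destruct hac
  set m := midpoint ℝ a b with hm
  have hmseg : m ∈ segment ℝ a b := midpoint_mem_segment a b
  have ham : a ≠ m := by
    rw [hm]; intro h; exact hab (by simpa using h.symm)
  have hmb : m ≠ b := by
    rw [hm]; intro h; exact hab (by simpa using h)
  have hsub1 : segment ℝ a m ⊆ segment ℝ a b :=
    (convex_segment a b).segment_subset (left_mem_segment ℝ _ _) hmseg
  have hsub2 : segment ℝ m b ⊆ segment ℝ a b :=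
    (convex_segment a b).segment_subset hmseg (right_mem_segment ℝ _ _)
  have hmm : segment ℝ a m ∩ segment ℝ m b ⊆ {m} := by
    rintro x ⟨h1, h2⟩
    rw [segment_eq_image'] at h1 h2
    obtain ⟨t, ht, rfl⟩ := h1
    obtain ⟨t', ht', hx⟩ := h2
    have hm' : m = a + (1 / 2 : ℝ) • (b - a) := by
      rw [hm, midpoint_eq_smul_add, invOf_eq_inv]; module
    have e : (t / 2) • (b - a) = (1 / 2 + t' / 2 : ℝ) • (b - a) := by
      simp only [hm'] at hx
      have : (t / 2) • (b - a) = a + t • (a + (1 / 2 : ℝ) • (b - a) - a) - a := by module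
      rw [this, ← hx]; module
    have e' := smul_left_injective ℝ (sub_ne_zero.2 hab.symm) e
    have : t = 1 := by have := ht.2; have := ht'.1; linarith
    subst this; simp
  have hbam : b ∉ segment ℝ a m := fun h => hmb (hmm ⟨h, right_mem_segment ℝ _ _⟩).symm
  refine ⟨m, segment ℝ m b ∪ B, ham, ?_, hB.cons hmb ?_, ?_, ?_, ?_⟩
  · intro h
    have : c = b := hi ⟨hsub1 h, hB.right_mem⟩
    exact hbam (this ▸ h)
  · exact fun x hx => hi ⟨hsub2 hx.1, hx.2⟩
  · rintro x ⟨hx, hx' | hx'⟩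
    · exact hmm ⟨hx, hx'⟩
    · have : x = b := hi ⟨hsub1 hx, hx'⟩
      exact absurd (this ▸ hx) hbam
  · rw [← Set.union_assoc]; congr 1
    apply Set.Subset.antisymm
    · intro y hy
      have := seg_split hmseg hy
      rwa [segment_symm ℝ m a] at this
    · exact Set.union_subset hsub1 hsub2
  · rintro (h | h)
    · exact ham (hmm ⟨left_mem_segment ℝ _ _, h⟩)
    · exact haB h

end Str14


namespace Str14
open Filter Topology

structure Drawing {V : Type} (W : Set V) (E : Set (Sym2 V)) (pos : V → ℂ) (A : Sym2 V → Set ℂ) :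
    Prop where
  fin : E.Finite
  sub : ∀ e ∈ E, ∀ w ∈ e, w ∈ W
  nd : ∀ u v, s(u, v) ∈ E → u ≠ v
  inj : Set.InjOn pos W
  spl : ∀ u v, s(u, v) ∈ E → SPL (pos u) (pos v) (A s(u, v))
  inter : ∀ e ∈ E, ∀ f ∈ E, e ≠ f → ∀ y ∈ A e, y ∈ A f → ∃ w, w ∈ e ∧ w ∈ f ∧ pos w = y
  vert : ∀ e ∈ E, ∀ w ∈ W, pos w ∈ A e → w ∈ e

def PP {V : Type} (E : Set (Sym2 V)) : Prop := ∃ W pos A, Drawing W E pos A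

def vt {V : Type} (E : Set (Sym2 V)) : Set V := {w | ∃ e ∈ E, w ∈ e}

variable {V : Type} {W W' : Set V} {E E' : Set (Sym2 V)} {pos : V → ℂ} {A : Sym2 V → Set ℂ}

theorem Drawing.mono (h : Drawing W E pos A) (hE : E' ⊆ E) : Drawing W E' pos A :=
  ⟨h.fin.subset hE, fun e he => h.sub e (hE he), fun u v he => h.nd u v (hE he), h.inj,
    fun u v he => h.spl u v (hE he), fun e he f hf => h.inter e (hE he) f (hE hf),
    fun e he => h.vert e (hE he)⟩

theorem Drawing.restrict (h : Drawing W E pos A) (hW : W' ⊆ W) (hs : ∀ e ∈ E, ∀ w ∈ e, w ∈ W') :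
    Drawing W' E pos A :=
  ⟨h.fin, hs, h.nd, h.inj.mono hW, h.spl, h.inter, fun e he w hw => h.vert e he w (hW hw)⟩

theorem Drawing.toVt (h : Drawing W E pos A) : Drawing (vt E) E pos A :=
  h.restrict (fun _ ⟨e, he, hw⟩ => h.sub e he _ hw) fun e he _ hw => ⟨e, he, hw⟩

theorem PP.mono (h : PP E) (hE : E' ⊆ E) : PP E' := by
  obtain ⟨W, pos, A, h⟩ := h
  exact ⟨W, pos, A, h.mono hE⟩

theorem Drawing.pos_mem (h : Drawing W E pos A) {e : Sym2 V} (he : e ∈ E) {w : V} (hw : w ∈ e) :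
    pos w ∈ A e := by
  obtain ⟨x, rfl⟩ := Sym2.mem_iff_exists.1 hw
  exact (h.spl _ _ he).left_mem

theorem Drawing.tame (h : Drawing W E pos A) {e : Sym2 V} (he : e ∈ E) : Tame (A e) := by
  induction e using Sym2.inductionOn with
  | hf x y => exact (h.spl _ _ he).tame

theorem Drawing.add (h : Drawing W E pos A) {a b : V} {C : Set ℂ} (hab : a ≠ b)
    (hne : s(a, b) ∉ E) (ha : a ∈ W) (hb : b ∈ W) (hC : SPL (pos a) (pos b) C)
    (hi : ∀ f ∈ E, ∀ y ∈ C, y ∈ A f → ∃ w, w ∈ s(a, b) ∧ w ∈ f ∧ pos w = y)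
    (hv : ∀ w ∈ W, pos w ∈ C → w ∈ s(a, b)) :
    ∃ A', Drawing W (insert s(a, b) E) pos A' ∧ A' s(a, b) = C ∧ ∀ f ∈ E, A' f = A f := by
  classical
  have h1 : Function.update A s(a, b) C s(a, b) = C := Function.update_self ..
  have h2 : ∀ f ∈ E, Function.update A s(a, b) C f = A f := fun f hf =>
    Function.update_of_ne (by rintro rfl; exact hne hf) ..
  refine ⟨Function.update A s(a, b) C, ⟨h.fin.insert _, ?_, ?_, h.inj, ?_, ?_, ?_⟩, h1, h2⟩
  · rintro e (rfl | he) w hw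
    · rcases Sym2.mem_iff.1 hw with rfl | rfl <;> assumption
    · exact h.sub e he w hw
  · rintro u v (he | he)
    · rcases Sym2.eq_iff.1 he with ⟨rfl, rfl⟩ | ⟨rfl, rfl⟩
      · exact hab
      · exact hab.symm
    · exact h.nd u v he
  · rintro u v (he | he)
    · rw [he, h1]
      rcases Sym2.eq_iff.1 he with ⟨rfl, rfl⟩ | ⟨rfl, rfl⟩
      · exact hC
      · exact hC.symm
    · rw [h2 _ he]; exact h.spl u v he
  · rintro e (rfl | he) f (rfl | hf) hef y hy hy'
    · exact absurd rfl hef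
    · rw [h1] at hy; rw [h2 _ hf] at hy'; exact hi f hf y hy hy'
    · rw [h2 _ he] at hy; rw [h1] at hy'
      obtain ⟨w, hw1, hw2, hw3⟩ := hi e he y hy' hy
      exact ⟨w, hw2, hw1, hw3⟩
    · rw [h2 _ he] at hy; rw [h2 _ hf] at hy'
      exact h.inter e he f hf hef y hy hy'
  · rintro e (rfl | he) w hw hy
    · rw [h1] at hy; exact hv w hw hy
    · rw [h2 _ he] at hy; exact h.vert e he w hw hy

theorem Drawing.newvert [DecidableEq V] (h : Drawing W E pos A) {ζ : V} {z : ℂ} (hζ : ζ ∉ W)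
    (hz : ∀ w ∈ W, pos w ≠ z) (hzA : ∀ f ∈ E, z ∉ A f) :
    Drawing (insert ζ W) E (Function.update pos ζ z) A := by
  have h1 : Function.update pos ζ z ζ = z := Function.update_self ..
  have h2 : ∀ w ∈ W, Function.update pos ζ z w = pos w := fun w hw =>
    Function.update_of_ne (by rintro rfl; exact hζ hw) ..
  refine ⟨h.fin, fun e he w hw => Or.inr (h.sub e he w hw), h.nd, ?_, ?_, ?_, ?_⟩
  · rintro w (rfl | hw) w' (rfl | hw') hww
    · rfl
    · rw [h1, h2 _ hw'] at hww; exact absurd hww.symm (hz _ hw')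
    · rw [h1, h2 _ hw] at hww; exact absurd hww (hz _ hw)
    · rw [h2 _ hw, h2 _ hw'] at hww; exact h.inj hw hw' hww
  · intro u v he
    rw [h2 _ (h.sub _ he u (by simp)), h2 _ (h.sub _ he v (by simp))]
    exact h.spl u v he
  · intro e he f hf hef y hy hy'
    obtain ⟨w, hw1, hw2, hw3⟩ := h.inter e he f hf hef y hy hy'
    exact ⟨w, hw1, hw2, by rw [h2 _ (h.sub _ he w hw1)]; exact hw3⟩
  · rintro e he w (rfl | hw) hy
    · rw [h1] at hy; exact absurd hy (hzA e he)
    · rw [h2 _ hw] at hy; exact h.vert e he w hw hy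

theorem PP.merge {z a b : V} (h : PP (insert s(z, a) (insert s(z, b) E))) (hz : z ∉ vt E)
    (hab : a ≠ b) : PP (insert s(a, b) E) := by
  by_cases hE : s(a, b) ∈ E
  · rw [Set.insert_eq_of_mem hE]
    exact h.mono (fun e he => Or.inr (Or.inr he))
  obtain ⟨W, pos, A, h⟩ := h
  have hza : s(z, a) ∈ (insert s(z, a) (insert s(z, b) E)) := Or.inl rfl
  have hzb : s(z, b) ∈ (insert s(z, a) (insert s(z, b) E)) := Or.inr (Or.inl rfl)
  have hne : s(z, a) ≠ s(z, b) := fun h => hab (by simp at h; rcases h with h | ⟨h, h'⟩; exacts [h, h'.trans h])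
  have nza := h.nd _ _ hza
  have nzb := h.nd _ _ hzb
  have hd : Drawing (W \ {z}) E pos A :=
    (h.mono (fun e he => Or.inr (Or.inr he))).restrict Set.sdiff_subset (fun e he w hw =>
      ⟨h.sub e (Or.inr (Or.inr he)) w hw, fun hwz => hz ⟨e, he, hwz ▸ hw⟩⟩)
  have haux : ∀ c, s(z, c) ∈ (insert s(z, a) (insert s(z, b) E)) → ∀ f ∈ E, ∀ y ∈ A s(z, c), y ∈ A f →
      c ∈ f ∧ pos c = y := by
    intro c hc f hf y hy hy'
    have hcf : s(z, c) ≠ f := by rintro rfl; exact hz ⟨_, hf, by simp⟩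
    obtain ⟨w, hw1, hw2, rfl⟩ := h.inter _ hc f (Or.inr (Or.inr hf)) hcf y hy hy'
    rcases Sym2.mem_iff.1 hw1 with rfl | rfl
    · exact absurd ⟨f, hf, hw2⟩ hz
    · exact ⟨hw2, rfl⟩
  obtain ⟨A', hA', -⟩ := hd.add hab hE ⟨h.sub _ hza a (by simp), nza.symm⟩
    ⟨h.sub _ hzb b (by simp), nzb.symm⟩ (C := A s(z, a) ∪ A s(z, b))
    ((h.spl _ _ hza).symm.trans (h.spl _ _ hzb) (by
      rintro y ⟨hy, hy'⟩
      obtain ⟨w, hw1, hw2, rfl⟩ := h.inter _ hza _ hzb hne y hy hy'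
      rcases Sym2.mem_iff.1 hw1 with rfl | rfl
      · rfl
      · rcases Sym2.mem_iff.1 hw2 with rfl | rfl
        · rfl
        · exact absurd rfl hab))
    (by
      rintro f hf y (hy | hy) hy'
      · exact ⟨a, by simp, haux a hza f hf y hy hy'⟩
      · exact ⟨b, by simp, haux b hzb f hf y hy hy'⟩)
    (by
      rintro w ⟨hw, hwz⟩ (hy | hy)
      · rcases Sym2.mem_iff.1 (h.vert _ hza w hw hy) with rfl | rfl
        · exact absurd rfl hwz
        · simp
      · rcases Sym2.mem_iff.1 (h.vert _ hzb w hw hy) with rfl | rfl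
        · exact absurd rfl hwz
        · simp)
  exact ⟨_, _, _, hA'⟩

theorem bad_finite {D : Set ℂ} (hD : Tame D) (p : ℂ) :
    {t : ℝ | ¬ ∃ ε : ℝ, 0 < ε ∧ ∀ s : ℝ, 0 < s → s ≤ ε → p + s * (1 + t * Complex.I) ∉ D}.Finite := by
  induction hD with
  | empty => exact Set.finite_empty.subset fun t ht => ht ⟨1, one_pos, by simp⟩
  | @cons c d A hA ih =>
    have key : ∀ c : ℂ, ∀ t : ℝ, t ≠ (c - p).im / (c - p).re → ∀ s : ℝ, 0 < s →
        p + s * (1 + t * Complex.I) ∉ segment ℝ p c := by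
      intro c t ht s hs hmem
      apply ht
      rw [segment_eq_image'] at hmem
      obtain ⟨r, hr, hx⟩ := hmem
      simp only [add_right_inj, Complex.real_smul] at hx
      have h1 := congrArg Complex.re hx
      have h2 := congrArg Complex.im hx
      simp at h1 h2
      have h3 : c.re - p.re ≠ 0 := by rintro h; rw [h] at h1; simp at h1; exact hs.ne h1
      have h4 : r ≠ 0 := by rintro rfl; simp at h1; exact hs.ne h1
      simp only [Complex.sub_re, Complex.sub_im]
      rw [eq_div_iff h3]
      rw [← h1] at h2
      apply mul_left_cancel₀ h4
      linear_combination -h2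
    refine (ih.union (Set.toFinite {(c - p).im / (c - p).re, (d - p).im / (d - p).re})).subset ?_
    intro t ht
    by_contra hcon
    simp only [Set.mem_union, not_or, Set.mem_insert_iff, Set.mem_singleton_iff] at hcon
    obtain ⟨h0, h1, h2⟩ := hcon
    apply ht
    have h0 := not_not.1 h0
    obtain ⟨ε, hε, h0⟩ := h0
    by_cases hp : p ∈ segment ℝ c d
    · refine ⟨ε, hε, fun s hs hsε hmem => ?_⟩
      rcases hmem with hmem | hmem
      · rcases seg_split hp hmem with h | h
        · exact key c t h1 s hs h
        · exact key d t h2 s hs h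
      · exact h0 s hs hsε hmem
    · have hc : Tendsto (fun s : ℝ => p + s * (1 + t * Complex.I)) (𝓝 0) (𝓝 p) := by
        have : Continuous (fun s : ℝ => p + s * (1 + t * Complex.I)) := by fun_prop
        simpa using this.tendsto 0
      have := hc.eventually ((segment_compact c d).isClosed.isOpen_compl.mem_nhds hp)
      obtain ⟨δ, hδ, hb⟩ := Metric.eventually_nhds_iff.1 this
      refine ⟨min ε (δ / 2), by positivity, fun s hs hsε hmem => ?_⟩
      rcases hmem with hmem | hmem
      · refine hb ?_ hmem
        have := hsε.trans (min_le_right _ _)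
        rw [Real.dist_eq, sub_zero, abs_of_pos hs]; linarith
      · exact h0 s hs (hsε.trans (min_le_left _ _)) hmem

theorem pendant_pt {D : Set ℂ} (hD : Tame D) (p : ℂ) : ∃ q, q ≠ p ∧ segment ℝ p q ∩ D ⊆ {p} := by
  obtain ⟨t, ht⟩ := (bad_finite hD p).infinite_compl.nonempty
  have ht := not_not.1 ht
  obtain ⟨ε, hε, h⟩ := ht
  refine ⟨p + ε * (1 + t * Complex.I), ?_, ?_⟩
  · intro h
    have h1 := congrArg Complex.re h
    simp at h1; exact hε.ne' h1
  · rintro x ⟨hx, hxD⟩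
    rw [segment_eq_image'] at hx
    obtain ⟨r, hr, rfl⟩ := hx
    rcases hr.1.eq_or_lt with rfl | hr0
    · simp
    · exfalso
      refine h (r * ε) (by positivity) (by nlinarith [hr.2]) ?_
      convert hxD using 1
      simp; ring

theorem PP.pendant {u a : V} (h : PP E) (hu : u ∈ vt E) (ha : a ∉ vt E) : PP (insert s(u, a) E) := by
  classical
  obtain ⟨W, pos, A, h⟩ := h
  replace h := h.toVt
  obtain ⟨q, hq, hqD⟩ := pendant_pt (Tame.biUnion h.fin (f := A) fun e he => h.tame he) (pos u)
  have hqA : ∀ f ∈ E, q ∉ A f := fun f hf hh =>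
    hq (hqD ⟨right_mem_segment ℝ _ _, Set.mem_biUnion hf hh⟩)
  have hn := h.newvert (z := q) ha (by
    rintro w ⟨e, he, hw⟩ rfl
    exact hqA e he (h.pos_mem he hw)) hqA
  have hua : u ≠ a := fun h => ha (h ▸ hu)
  have h1 : Function.update pos a q a = q := Function.update_self ..
  have h2 : ∀ w ∈ vt E, Function.update pos a q w = pos w := fun w hw =>
    Function.update_of_ne (by rintro rfl; exact ha hw) ..
  have hh : ∀ f ∈ E, ∀ y ∈ segment ℝ (pos u) q, y ∈ A f → y = pos u := fun f hf y hy hy' =>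
    hqD ⟨hy, Set.mem_biUnion hf hy'⟩
  obtain ⟨A', hA', -⟩ := hn.add hua (fun hm => ha ⟨_, hm, by simp⟩) (Or.inr hu) (Or.inl rfl)
    (C := segment ℝ (pos u) q) (by rw [h1, h2 u hu]; exact SPL.seg hq.symm)
    (by
      intro f hf y hy hy'
      have := hh f hf y hy hy'
      subst this
      exact ⟨u, by simp, h.vert f hf u hu hy', h2 u hu⟩)
    (by
      rintro w (rfl | hw) hy
      · simp
      · rw [h2 w hw] at hy
        obtain ⟨e, he, hwe⟩ := id hw
        have := hh e he _ hy (h.pos_mem he hwe)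
        rw [h.inj hw hu this]; simp)
  exact ⟨_, _, _, hA'⟩

theorem shoot {p z b x : ℂ} {N B D T : Set ℂ} (hpb : p ≠ b) (hpz : p ≠ z) (hB : SPL b x B)
    (hpB : segment ℝ p b ∩ B ⊆ {b}) (hD : Tame D) (hT : Tame T) (hbN : b ∈ N)
    (hb : segment ℝ p b ∩ D ⊆ {b}) (hz : segment ℝ p z ∩ D ⊆ {z}) (hBD : B ⊆ D)
    (hg : ∃ d, Good ((fun n => n - p) '' N) (b - p) (z - p) d) (hTB : T ∩ B ⊆ {x})
    (hTD : T ⊆ D ∪ ⋃ n ∈ N, segment ℝ p n) :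
    ∃ C, SPL z x C ∧ C ∩ (segment ℝ p b ∪ B ∪ T) ⊆ {z, x} := by
  obtain ⟨d, hd⟩ := hg
  obtain ⟨s, hsb, h1, h2⟩ := turn hD hpb hpz hb hz hbN hd
  have hsub : segment ℝ p b ∪ B ∪ T ⊆ D ∪ ⋃ n ∈ N, segment ℝ p n := by
    refine Set.union_subset (Set.union_subset ?_ ?_) hTD
    · exact fun y hy => Or.inr (Set.mem_biUnion hbN hy)
    · exact fun y hy => Or.inl (hBD hy)
  obtain ⟨C, hC, hC'⟩ := walk hB p s T hT hpb hsb hpB hTB (fun y hy => h1 ⟨hy.1, hsub hy.2⟩)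
  obtain ⟨C1, hC1, hS⟩ := (hC.cons (a := z)).extract
  refine ⟨C1, hS, ?_⟩
  rintro y ⟨hy, hy'⟩
  rcases hC1 hy with h | h
  · rw [segment_symm] at h
    exact Or.inl (h2 ⟨h, hsub hy'⟩)
  · exact Or.inr (hC' ⟨h, hy'⟩)

end Str14


namespace Str14
open Filter Topology

variable {V : Type} {W W' : Set V} {E E' : Set (Sym2 V)} {pos : V → ℂ} {A : Sym2 V → Set ℂ}

theorem PP.gadget {u v x₁ x₂ ζ : V} (h : PP E) (he : s(u, v) ∈ E) (h1 : s(u, x₁) ∈ E)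
    (h2 : s(u, x₂) ∈ E) (h12 : x₁ ≠ x₂) (h1v : x₁ ≠ v) (h2v : x₂ ≠ v) (hζ : ζ ∉ vt E) :
    ∃ x y, x ≠ y ∧ x ≠ v ∧ y ≠ v ∧ s(u, x) ∈ E ∧ s(u, y) ∈ E ∧
      PP (insert s(ζ, y) (insert s(ζ, x) (insert s(ζ, u) (insert s(ζ, v) (E \ {s(u, v)}))))) := by
  classical
  obtain ⟨W, pos, A, h⟩ := h
  replace h := h.toVt
  set p := pos u with hp
  set Nb : Set V := {w | s(u, w) ∈ E} with hNb
  have hNbfin : Nb.Finite := by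
    refine Set.Finite.preimage (f := fun w => s(u, w)) ?_ h.fin
    intro a _ b _ hab
    simp at hab
    rcases hab with h | ⟨h, h'⟩
    exacts [h, h'.trans h]
  have hall : ∀ w, ∃ m B, w ∈ Nb → p ≠ m ∧ pos w ∉ segment ℝ p m ∧ SPL m (pos w) B ∧
      segment ℝ p m ∩ B ⊆ {m} ∧ A s(u, w) = segment ℝ p m ∪ B ∧ p ∉ B := by
    intro w
    by_cases hw : w ∈ Nb
    · have hne : p ≠ pos w := fun hh => h.nd u w hw
        (h.inj ⟨_, hw, by simp⟩ ⟨_, hw, by simp⟩ hh)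
      obtain ⟨m, B, hmB⟩ := (h.spl u w hw).destruct' hne
      exact ⟨m, B, fun _ => hmB⟩
    · exact ⟨0, ∅, fun hw' => absurd hw' hw⟩
  choose n B hn using hall
  have hne : ∀ w ∈ Nb, p ≠ n w := fun w hw => (hn w hw).1
  have hposn : ∀ w ∈ Nb, pos w ∉ segment ℝ p (n w) := fun w hw => (hn w hw).2.1
  have hspl : ∀ w ∈ Nb, SPL (n w) (pos w) (B w) := fun w hw => (hn w hw).2.2.1
  have hnB : ∀ w ∈ Nb, segment ℝ p (n w) ∩ B w ⊆ {n w} := fun w hw => (hn w hw).2.2.2.1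
  have hA : ∀ w ∈ Nb, A s(u, w) = segment ℝ p (n w) ∪ B w := fun w hw => (hn w hw).2.2.2.2.1
  have hpB : ∀ w ∈ Nb, p ∉ B w := fun w hw => (hn w hw).2.2.2.2.2
  have hsegA : ∀ w ∈ Nb, segment ℝ p (n w) ⊆ A s(u, w) := fun w hw => by
    rw [hA w hw]; exact Set.subset_union_left
  have hBA : ∀ w ∈ Nb, B w ⊆ A s(u, w) := fun w hw => by
    rw [hA w hw]; exact Set.subset_union_right
  have hcross : ∀ w ∈ Nb, ∀ w' ∈ Nb, w ≠ w' → ∀ y ∈ A s(u, w), y ∈ A s(u, w') → y = p := by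
    intro w hw w' hw' hww y hy hy'
    obtain ⟨c, hc, hc', rfl⟩ := h.inter _ hw _ hw' (by
      intro hh; simp at hh; rcases hh with hh | ⟨hh, hh'⟩
      exacts [hww hh, hww (hh'.trans hh)]) y hy hy'
    rcases Sym2.mem_iff.1 hc with rfl | rfl
    · rfl
    · rcases Sym2.mem_iff.1 hc' with rfl | rfl
      · rfl
      · exact absurd rfl hww
  have hother : ∀ w ∈ Nb, ∀ f ∈ E, u ∉ f → ∀ y ∈ A s(u, w), y ∈ A f → y = pos w := by
    intro w hw f hf huf y hy hy'
    obtain ⟨c, hc, hc', rfl⟩ := h.inter _ hw _ hf (by rintro rfl; simp at huf) y hy hy'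
    rcases Sym2.mem_iff.1 hc with rfl | rfl
    · exact absurd hc' huf
    · rfl
  have hray : ∀ w ∈ Nb, ∀ w' ∈ Nb, SameRay ℝ (n w - p) (n w' - p) → w = w' := by
    intro w hw w' hw' hr
    by_contra hww
    exact not_sameRay (hne w hw) (hne w' hw') (fun y hy =>
      hcross w hw w' hw' hww y (hsegA w hw hy.1) (hsegA w' hw' hy.2)) hr
  set z := n v with hz
  have hvNb : v ∈ Nb := he
  obtain ⟨x, y, hx, hy, hxy, hxv, hyv, hgx, hgy⟩ : ∃ x y, x ∈ Nb ∧ y ∈ Nb ∧ x ≠ y ∧ x ≠ v ∧ y ≠ v ∧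
      (∃ d, Good ((fun m => m - p) '' (n '' Nb)) (n x - p) (z - p) d) ∧
      (∃ d, Good ((fun m => m - p) '' (n '' Nb)) (n y - p) (z - p) d) := by
    have hinj : ∀ w ∈ Nb, ∀ w' ∈ Nb, n w - p = n w' - p → w = w' := fun w hw w' hw' hh =>
      hray w hw w' hw' (by rw [hh])
    obtain ⟨b, ⟨_, ⟨x, hx, rfl⟩, rfl⟩, b', ⟨_, ⟨y, hy, rfl⟩, rfl⟩, e1, e2, e3, e4, e5⟩ :=
      sector (N := (fun m => m - p) '' (n '' Nb)) ((hNbfin.image _).image _) (q := z - p)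
      ⟨_, ⟨v, hvNb, rfl⟩, rfl⟩
      (by
        rintro _ ⟨_, ⟨w, hw, rfl⟩, rfl⟩
        exact sub_ne_zero.2 (hne w hw).symm)
      (by
        rintro _ ⟨_, ⟨w, hw, rfl⟩, rfl⟩ _ ⟨_, ⟨w', hw', rfl⟩, rfl⟩ hr
        rw [hray w hw w' hw' hr])
      (m₁ := n x₁ - p) (m₂ := n x₂ - p) ⟨_, ⟨x₁, h1, rfl⟩, rfl⟩ ⟨_, ⟨x₂, h2, rfl⟩, rfl⟩
      (fun hh => h12 (hinj _ h1 _ h2 hh)) (fun hh => h1v (hinj _ h1 _ hvNb hh))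
      (fun hh => h2v (hinj _ h2 _ hvNb hh))
    exact ⟨x, y, hx, hy, fun hh => e3 (by rw [hh]), fun hh => e1 (by rw [hh]),
      fun hh => e2 (by rw [hh]), e4, e5⟩
  refine ⟨x, y, hxy, hxv, hyv, hx, hy, ?_⟩
  -- obstacles
  set D : Set ℂ := (⋃ g ∈ {g ∈ E | u ∉ g}, A g) ∪ ⋃ w ∈ Nb, B w with hD
  have hDt : Tame D := (Tame.biUnion (h.fin.subset fun g hg => hg.1) fun g hg => h.tame hg.1).union
    (Tame.biUnion hNbfin fun w hw => (hspl w hw).tame)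
  have hsegD : ∀ w ∈ Nb, segment ℝ p (n w) ∩ D ⊆ {n w} := by
    rintro w hw y ⟨hy, hy' | hy'⟩
    · simp only [Set.mem_iUnion] at hy'
      obtain ⟨g, ⟨hg, hug⟩, hy'⟩ := hy'
      have := hother w hw g hg hug y (hsegA w hw hy) hy'
      rw [this] at hy
      exact absurd hy (hposn w hw)
    · simp only [Set.mem_iUnion] at hy'
      obtain ⟨w', hw', hy'⟩ := hy'
      by_cases hww : w = w'
      · subst hww; exact hnB w hw ⟨hy, hy'⟩
      · have := hcross w hw w' hw' hww y (hsegA w hw hy) (hBA w' hw' hy')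
        rw [this] at hy'
        exact absurd hy' (hpB w' hw')
  have hED : ∀ g ∈ E, A g ⊆ D ∪ ⋃ m ∈ n '' Nb, segment ℝ p m := by
    intro g hg y hy
    by_cases hug : u ∈ g
    · obtain ⟨w, rfl⟩ := Sym2.mem_iff_exists.1 hug
      rw [hA w hg] at hy
      rcases hy with hy | hy
      · exact Or.inr (Set.mem_biUnion (Set.mem_image_of_mem n hg) hy)
      · exact Or.inl (Or.inr (Set.mem_biUnion (show w ∈ Nb from hg) hy))
    · exact Or.inl (Or.inl (Set.mem_biUnion (show g ∈ {g ∈ E | u ∉ g} from ⟨hg, hug⟩) hy))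
  have hzA : z ∈ A s(u, v) := hsegA v hvNb (right_mem_segment ℝ _ _)
  have hpz : p ≠ z := hne v hvNb
  have hzf : ∀ f ∈ E, f ≠ s(u, v) → z ∉ A f := by
    intro f hf hfe hzf
    obtain ⟨c, hc, hc', hcz⟩ := h.inter _ hf _ he hfe z hzf hzA
    rcases Sym2.mem_iff.1 hc' with rfl | rfl
    · exact hpz hcz
    · exact hposn c hvNb (by rw [hcz]; exact right_mem_segment ℝ _ _)
  have hshoot : ∀ x ∈ Nb, (∃ d, Good ((fun m => m - p) '' (n '' Nb)) (n x - p) (z - p) d) →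
      ∀ X, Tame X → X ∩ A s(u, x) = ∅ → segment ℝ p z ∩ X ⊆ {z} →
      ∃ C, SPL z (pos x) C ∧ (∀ g ∈ E, C ∩ A g ⊆ {z, pos x}) ∧ C ∩ X ⊆ {z, pos x} := by
    intro x hx hg X hX hXA hXz
    obtain ⟨C, hC, hC'⟩ := shoot (D := D ∪ X) (T := (⋃ g ∈ {g ∈ E | g ≠ s(u, x)}, A g) ∪ X)
      (hne x hx) hpz (hspl x hx) (hnB x hx) (hDt.union hX)
      ((Tame.biUnion (h.fin.subset fun g hg => hg.1) fun g hg => h.tame hg.1).union hX)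
      (N := n '' Nb) ⟨x, hx, rfl⟩
      (by
        rintro y ⟨hy, hy' | hy'⟩
        · exact hsegD x hx ⟨hy, hy'⟩
        · exact absurd (show y ∈ X ∩ A s(u, x) from ⟨hy', hsegA x hx hy⟩) (by simp [hXA]))
      (by
        rintro y ⟨hy, hy' | hy'⟩
        · exact hsegD v hvNb ⟨hy, hy'⟩
        · exact hXz ⟨hy, hy'⟩)
      (fun y hy => Or.inl (Or.inr (Set.mem_biUnion hx hy))) hg
      (by
        rintro y ⟨hy | hy, hy'⟩
        · simp only [Set.mem_iUnion] at hy
          obtain ⟨g, ⟨hg, hgx⟩, hy⟩ := hy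
          by_cases hug : u ∈ g
          · obtain ⟨w, rfl⟩ := Sym2.mem_iff_exists.1 hug
            have := hcross w hg x hx (fun hh => hgx (by rw [hh])) y hy (hBA x hx hy')
            rw [this] at hy'
            exact absurd hy' (hpB x hx)
          · exact hother x hx g hg hug y (hBA x hx hy') hy
        · exact absurd (show y ∈ X ∩ A s(u, x) from ⟨hy, hBA x hx hy'⟩) (by simp [hXA]))
      (by
        rintro y (hy | hy)
        · simp only [Set.mem_iUnion] at hy
          obtain ⟨g, ⟨hg, hgx⟩, hy⟩ := hy
          rcases hED g hg hy with h | h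
          · exact Or.inl (Or.inl h)
          · exact Or.inr h
        · exact Or.inl (Or.inr hy))
    refine ⟨C, hC, ?_, fun y hy => hC' ⟨hy.1, Or.inr (Or.inr hy.2)⟩⟩
    rintro g hg y ⟨hy, hy'⟩
    by_cases hgx : g = s(u, x)
    · subst hgx
      rw [hA x hx] at hy'
      exact hC' ⟨hy, Or.inl hy'⟩
    · exact hC' ⟨hy, Or.inr (Or.inl (Set.mem_biUnion (show g ∈ {g ∈ E | g ≠ s(u, x)} from ⟨hg, hgx⟩) hy'))⟩
  have hvt : ∀ w ∈ Nb, w ∈ vt E := fun w hw => ⟨_, hw, by simp⟩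
  have huvt : u ∈ vt E := ⟨_, he, by simp⟩
  have huNb : ∀ w ∈ Nb, u ≠ w := fun w hw => h.nd u w hw
  obtain ⟨Cx, hCx, hCxE, -⟩ := hshoot x hx hgx ∅ Tame.empty (by simp) (by simp)
  have hCxy : Cx ∩ A s(u, y) = ∅ := by
    ext q
    simp only [Set.mem_inter_iff, Set.mem_empty_iff_false, iff_false, not_and]
    intro hq hq'
    rcases hCxE _ hy ⟨hq, hq'⟩ with rfl | rfl
    · exact hzf _ hy (fun hh => hyv (by
        simp at hh; rcases hh with hh | ⟨hh, hh'⟩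
        exacts [hh, hh'.trans hh])) hq'
    · rcases Sym2.mem_iff.1 (h.vert _ hy x (hvt x hx) hq') with hh | hh
      · exact huNb x hx hh.symm
      · exact hxy hh
  obtain ⟨Cy, hCy, hCyE, hCyx⟩ := hshoot y hy hgy Cx hCx.tame hCxy (by
    rintro q ⟨hq, hq'⟩
    rcases hCxE _ he ⟨hq', hsegA v hvNb hq⟩ with rfl | rfl
    · rfl
    · exfalso
      rcases Sym2.mem_iff.1 (h.vert _ he x (hvt x hx) (hsegA v hvNb hq)) with hh | hh
      · exact huNb x hx hh.symm
      · exact hxv hh)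
  have hCyx' : ∀ q ∈ Cy, q ∈ Cx → q = z := by
    intro q hq hq'
    rcases hCyx ⟨hq, hq'⟩ with rfl | rfl
    · rfl
    · have : pos y ∈ Cx ∩ A s(u, y) := ⟨hq', h.pos_mem hy (by simp)⟩
      rw [hCxy] at this; exact absurd this (by simp)
  -- vertices hit by the new arcs
  have hvx : ∀ (x : V) (C : Set ℂ), x ∈ Nb → (∀ g ∈ E, C ∩ A g ⊆ {z, pos x}) → ∀ w ∈ vt E, pos w ∈ C → w = x := by
    rintro x C hx hC w ⟨g, hg, hwg⟩ hw
    rcases hC g hg ⟨hw, h.pos_mem hg hwg⟩ with hh | hh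
    · exfalso
      by_cases hge : g = s(u, v)
      · subst hge
        rcases Sym2.mem_iff.1 hwg with rfl | rfl
        · exact hpz hh
        · exact hposn _ hvNb (by rw [hh]; exact right_mem_segment ℝ _ _)
      · exact hzf g hg hge (hh ▸ h.pos_mem hg hwg)
    · exact h.inj ⟨g, hg, hwg⟩ (hvt x hx) hh
  -- the drawing
  have hzpos : ∀ w ∈ vt E, pos w ≠ z := by
    intro w hw hh
    rcases Sym2.mem_iff.1 (h.vert _ he w hw (hh ▸ hzA)) with rfl | rfl
    · exact hpz hh
    · exact hposn _ hvNb (by rw [hh]; exact right_mem_segment ℝ _ _)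
  have hd0 := (h.mono (E' := E \ {s(u, v)}) Set.sdiff_subset).newvert hζ hzpos
    (fun f hf => hzf f hf.1 hf.2)
  set pos' := Function.update pos ζ z with hpos'
  have p1 : pos' ζ = z := Function.update_self ..
  have p2 : ∀ w ∈ vt E, pos' w = pos w := fun w hw =>
    Function.update_of_ne (by rintro rfl; exact hζ hw) ..
  have hζE : ∀ w, s(ζ, w) ∉ E := fun w hw => hζ ⟨_, hw, by simp⟩
  have hζne : ∀ w ∈ vt E, ζ ≠ w := by rintro w hw rfl; exact hζ hw
  have hsne : ∀ {w w' : V}, w ≠ w' → s(ζ, w) ≠ s(ζ, w') := by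
    intro w w' hww hh
    simp at hh; rcases hh with hh | ⟨hh, hh'⟩
    exacts [hww hh, hww (hh'.trans hh)]
  obtain ⟨A1, hd1, hA1, hA1'⟩ := hd0.add (hζne v (hvt v hvNb)) (fun hh => hζE _ hh.1) (Or.inl rfl)
    (Or.inr (hvt v hvNb)) (C := B v) (by rw [p1, p2 _ (hvt v hvNb)]; exact hspl v hvNb)
    (by
      rintro f ⟨hf, hfe⟩ q hq hq'
      obtain ⟨c, hc, hc', rfl⟩ := h.inter _ hf _ he hfe q hq' (hBA v hvNb hq)
      rcases Sym2.mem_iff.1 hc' with rfl | rfl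
      · exact absurd hq (hpB v hvNb)
      · exact ⟨c, by simp, hc, p2 _ (hvt _ hvNb)⟩)
    (by
      rintro w (rfl | hw) hq
      · simp
      · rw [p2 w hw] at hq
        rcases Sym2.mem_iff.1 (h.vert _ he w hw (hBA v hvNb hq)) with rfl | rfl
        · exact absurd hq (hpB v hvNb)
        · simp)
  obtain ⟨A2, hd2, hA2, hA2'⟩ := hd1.add (hζne u huvt)
    (by
      rintro (hh | hh)
      · exact hsne (huNb v hvNb) hh
      · exact hζE _ hh.1) (Or.inl rfl)
    (Or.inr huvt) (C := segment ℝ p z) (by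
      rw [p1, p2 _ huvt, segment_symm]; exact SPL.seg hpz.symm)
    (by
      rintro f (rfl | hf) q hq hq'
      · rw [hA1] at hq'
        exact ⟨ζ, by simp, by simp, by rw [p1]; exact (hnB v hvNb ⟨hq, hq'⟩).symm⟩
      · rw [hA1' f hf] at hq'
        obtain ⟨hf, hfe⟩ := hf
        obtain ⟨c, hc, hc', rfl⟩ := h.inter _ hf _ he hfe q hq' (hsegA v hvNb hq)
        rcases Sym2.mem_iff.1 hc' with rfl | rfl
        · exact ⟨c, by simp, hc, p2 _ huvt⟩
        · exact absurd hq (hposn _ hvNb))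
    (by
      rintro w (rfl | hw) hq
      · simp
      · rw [p2 w hw] at hq
        rcases Sym2.mem_iff.1 (h.vert _ he w hw (hsegA v hvNb hq)) with rfl | rfl
        · simp
        · exact absurd hq (hposn _ hvNb))
  have hnew : ∀ (x : V) (C : Set ℂ), x ∈ Nb → x ≠ v → (∀ g ∈ E, C ∩ A g ⊆ {z, pos x}) →
      ∀ f ∈ (insert s(ζ, u) (insert s(ζ, v) (E \ {s(u, v)}))), ∀ y ∈ C, y ∈ A2 f →
      ∃ w, w ∈ s(ζ, x) ∧ w ∈ f ∧ pos' w = y := by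
    intro x C hx hxv hC f hf q hq hq'
    have hkey : q ∈ A s(u, v) → q = z := by
      intro hqe
      rcases hC _ he ⟨hq, hqe⟩ with hh | rfl
      · exact hh
      · exfalso
        rcases Sym2.mem_iff.1 (h.vert _ he x (hvt x hx) hqe) with hh | hh
        · exact huNb x hx hh.symm
        · exact hxv hh
    rcases hf with rfl | rfl | hf
    · rw [hA2] at hq'
      exact ⟨ζ, by simp, by simp, by rw [p1, hkey (hsegA v hvNb hq')]⟩
    · rw [hA2' _ (Or.inl rfl), hA1] at hq'
      exact ⟨ζ, by simp, by simp, by rw [p1, hkey (hBA v hvNb hq')]⟩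
    · rw [hA2' _ (Or.inr hf), hA1' _ hf] at hq'
      rcases hC f hf.1 ⟨hq, hq'⟩ with rfl | rfl
      · exact absurd hq' (hzf f hf.1 hf.2)
      · exact ⟨x, by simp, h.vert f hf.1 x (hvt x hx) hq', p2 _ (hvt x hx)⟩
  have hnewv : ∀ (x : V) (C : Set ℂ), x ∈ Nb → (∀ g ∈ E, C ∩ A g ⊆ {z, pos x}) →
      ∀ w ∈ insert ζ (vt E), pos' w ∈ C → w ∈ s(ζ, x) := by
    rintro x C hx hC w (rfl | hw) hq
    · simp
    · rw [p2 w hw] at hq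
      rw [hvx x C hx hC w hw hq]; simp
  obtain ⟨A3, hd3, hA3, hA3'⟩ := hd2.add (hζne x (hvt x hx))
    (by
      rintro (hh | hh | hh)
      · exact hsne (huNb x hx) hh.symm
      · exact hsne hxv hh
      · exact hζE _ hh.1) (Or.inl rfl) (Or.inr (hvt x hx)) (C := Cx)
    (by rw [p1, p2 _ (hvt x hx)]; exact hCx) (hnew x Cx hx hxv hCxE) (hnewv x Cx hx hCxE)
  obtain ⟨A4, hd4, -⟩ := hd3.add (hζne y (hvt y hy))
    (by
      rintro (hh | hh | hh | hh)
      · exact hsne hxy hh.symm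
      · exact hsne (huNb y hy) hh.symm
      · exact hsne hyv hh
      · exact hζE _ hh.1) (Or.inl rfl) (Or.inr (hvt y hy)) (C := Cy)
    (by rw [p1, p2 _ (hvt y hy)]; exact hCy)
    (by
      rintro f (rfl | hf) q hq hq'
      · rw [hA3] at hq'
        exact ⟨ζ, by simp, by simp, by rw [p1, hCyx' q hq hq']⟩
      · rw [hA3' f hf] at hq'
        exact hnew y Cy hy hyv hCyE f hf q hq hq')
    (hnewv y Cy hy hCyE)
  exact ⟨_, _, _, hd4⟩

end Str14


namespace Str14
open Filter Topology

theorem seg_slit {a b z : ℂ} (hz : z ∉ segment ℝ a b) : (b - z) / (a - z) ∈ Complex.slitPlane := by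
  rw [Complex.mem_slitPlane_iff_not_le_zero]
  intro hle
  apply hz
  have ha : a - z ≠ 0 := fun h => hz (by rw [← sub_eq_zero.1 h]; exact left_mem_segment ℝ _ _)
  obtain ⟨h1, h2⟩ := Complex.le_def.1 hle
  set t := -((b - z) / (a - z)).re with ht
  have ht0 : 0 ≤ t := by simp at h1; linarith
  have hq : (b - z) / (a - z) = -(t : ℂ) := by
    apply Complex.ext
    · simp [ht]
    · simpa using h2
  rw [div_eq_iff ha] at hq
  have h1t : (1 + t : ℝ) ≠ 0 := by positivity
  refine ⟨t / (1 + t), 1 / (1 + t), by positivity, by positivity, by field_simp; ring, ?_⟩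
  simp only [Complex.real_smul]
  have h1c : (1 + t : ℂ) ≠ 0 := by exact_mod_cast h1t
  push_cast
  field_simp
  linear_combination hq

theorem arg_unit {a b : ℂ} (ha : a ≠ 0) (hb : b ≠ 0) :
    Complex.exp (Complex.arg (b / a) * Complex.I) * (a / ‖a‖) = b / ‖b‖ := by
  have h := Complex.norm_mul_exp_arg_mul_I (b / a)
  have ha' : (‖a‖ : ℂ) ≠ 0 := by simpa using ha
  have hb' : (‖b‖ : ℂ) ≠ 0 := by simpa using hb
  rw [norm_div] at h
  push_cast at h
  field_simp at h ⊢
  linear_combination h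

theorem CH.isClosed {a b : ℂ} {A : Set ℂ} (h : CH a b A) : IsClosed A := by
  induction h with
  | single a => exact isClosed_singleton
  | cons _ ih => exact (segment_compact _ _).isClosed.union ih

theorem CH.wind {a b : ℂ} {A : Set ℂ} (h : CH a b A) : ∃ W : ℂ → ℝ, ContinuousOn W Aᶜ ∧
    ∀ z ∉ A, Complex.exp (W z * Complex.I) * ((a - z) / ‖a - z‖) = (b - z) / ‖b - z‖ := by
  induction h with
  | single a => exact ⟨fun _ => 0, continuousOn_const, by simp⟩
  | @cons a b c A h ih =>
    obtain ⟨W, hW, hW'⟩ := ih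
    refine ⟨fun z => Complex.arg ((b - z) / (a - z)) + W z, ?_, ?_⟩
    · refine ContinuousOn.add ?_ (hW.mono fun z hz hz' => hz (Or.inr hz'))
      intro z hz
      have hz' : z ∉ segment ℝ a b := fun h => hz (Or.inl h)
      have ha : a - z ≠ 0 := fun h => hz' (by rw [← sub_eq_zero.1 h]; exact left_mem_segment ℝ _ _)
      refine ContinuousAt.continuousWithinAt ?_
      refine (Complex.continuousAt_arg (seg_slit hz')).comp_of_eq (f := fun z => (b - z) / (a - z)) ?_ rfl
      exact ContinuousAt.div (by fun_prop) (by fun_prop) ha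
    · intro z hz
      have hz' : z ∉ segment ℝ a b := fun h => hz (Or.inl h)
      have ha : a - z ≠ 0 := fun h => hz' (by rw [← sub_eq_zero.1 h]; exact left_mem_segment ℝ _ _)
      have hb : b - z ≠ 0 := fun h => hz' (by rw [← sub_eq_zero.1 h]; exact right_mem_segment ℝ _ _)
      have h1 := arg_unit ha hb
      have h2 := hW' z fun h => hz (Or.inr h)
      rw [← h2, ← h1]
      push_cast
      rw [add_mul, Complex.exp_add]; ring

theorem neg_div_slit {a b : ℂ} (hb : b ≠ 0) (h : ¬ SameRay ℝ a b) :
    -(a / b) ∈ Complex.slitPlane := by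
  rw [Complex.mem_slitPlane_iff_not_le_zero]
  intro hle
  apply h
  obtain ⟨h1, h2⟩ := Complex.le_def.1 hle
  set t := (a / b).re with ht
  have ht0 : 0 ≤ t := by simpa using h1
  have hq : a / b = (t : ℂ) := by
    apply Complex.ext
    · simp [ht]
    · simpa using h2
  rw [div_eq_iff hb] at hq
  rw [hq, ← Complex.real_smul]
  exact SameRay.sameRay_nonneg_smul_left b ht0

theorem CH.wind_eq {x p r : ℂ} {K S : Set ℂ} (hK : CH p r K) (hxK : x ∉ K) (hS : IsPreconnected S)
    (hd : ∀ z ∈ S, z ∉ segment ℝ x p ∧ z ∉ K ∧ z ∉ segment ℝ x r) {d e : ℂ}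
    (hp : p - x ≠ 0) (hr : r - x ≠ 0) (hd0 : d ≠ 0) (he0 : e ≠ 0)
    (hpd : ¬ SameRay ℝ (p - x) d) (hpe : ¬ SameRay ℝ (p - x) e) (hdr : ¬ SameRay ℝ d (r - x))
    (her : ¬ SameRay ℝ e (r - x)) (hdS : ∀ᶠ ε : ℝ in 𝓝[>] 0, x + ε * d ∈ S)
    (heS : ∀ᶠ ε : ℝ in 𝓝[>] 0, x + ε * e ∈ S) :
    Complex.arg (-((p - x) / d)) + Complex.arg (-(d / (r - x))) =
      Complex.arg (-((p - x) / e)) + Complex.arg (-(e / (r - x))) := by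
  obtain ⟨W, hW, hW'⟩ := hK.wind
  set F : ℂ → ℝ := fun z => Complex.arg ((p - z) / (x - z)) + W z + Complex.arg ((x - z) / (r - z)) with hF
  have hne : ∀ z ∈ S, p - z ≠ 0 ∧ x - z ≠ 0 ∧ r - z ≠ 0 := by
    intro z hz
    obtain ⟨h1, h2, h3⟩ := hd z hz
    refine ⟨fun h => h1 ?_, fun h => h1 ?_, fun h => h3 ?_⟩ <;> rw [← sub_eq_zero.1 h]
    exacts [right_mem_segment ℝ _ _, left_mem_segment ℝ _ _, right_mem_segment ℝ _ _]
  have hFc : ContinuousOn F S := by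
    refine (ContinuousOn.add ?_ (hW.mono fun z hz => (hd z hz).2.1)).add ?_
    · intro z hz
      refine ContinuousAt.continuousWithinAt ?_
      refine (Complex.continuousAt_arg (seg_slit (hd z hz).1)).comp_of_eq
        (f := fun z => (p - z) / (x - z)) ?_ rfl
      exact ContinuousAt.div (by fun_prop) (by fun_prop) (hne z hz).2.1
    · intro z hz
      refine ContinuousAt.continuousWithinAt ?_
      have := (hd z hz).2.2
      rw [segment_symm] at this
      refine (Complex.continuousAt_arg (seg_slit this)).comp_of_eq
        (f := fun z => (x - z) / (r - z)) ?_ rfl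
      exact ContinuousAt.div (by fun_prop) (by fun_prop) (hne z hz).2.2
  have hFint : ∀ z ∈ S, ∃ n : ℤ, F z = n * (2 * Real.pi) := by
    intro z hz
    obtain ⟨h1, h2, h3⟩ := hne z hz
    have e1 := arg_unit h2 h1
    have e2 := hW' z (hd z hz).2.1
    have e3 := arg_unit h3 h2
    have : Complex.exp ((F z : ℂ) * Complex.I) = 1 := by
      have hu : ((x - z) / ‖x - z‖ : ℂ) ≠ 0 := div_ne_zero h2 (by simpa using h2)
      apply mul_right_cancel₀ hu
      rw [one_mul]
      nth_rewrite 2 [← e3]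
      rw [← e2, ← e1, hF]
      push_cast
      rw [add_mul, add_mul, Complex.exp_add, Complex.exp_add]; ring
    obtain ⟨n, hn⟩ := Complex.exp_eq_one_iff.1 this
    refine ⟨n, ?_⟩
    have hn' : (F z : ℂ) = n * (2 * Real.pi) := by
      apply mul_right_cancel₀ Complex.I_ne_zero
      rw [hn]; ring
    exact_mod_cast hn'
  have hle : ∀ z ∈ S, ∀ z' ∈ S, F z' ≤ F z := by
    intro z hz z' hz'
    by_contra hlt
    push Not at hlt
    obtain ⟨n, hn⟩ := hFint z hz
    obtain ⟨m, hm⟩ := hFint z' hz'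
    have hpi := Real.pi_pos
    have hnm : n < m := by
      rw [hn, hm] at hlt
      exact_mod_cast lt_of_mul_lt_mul_right hlt (by positivity)
    have hnm' : (n + 1 : ℝ) ≤ m := by exact_mod_cast hnm
    obtain ⟨y, hy, hy'⟩ := hS.intermediate_value hz hz' hFc
      (show (n + 1 / 2 : ℝ) * (2 * Real.pi) ∈ Set.Icc (F z) (F z') by
        rw [hn, hm]; constructor <;> nlinarith)
    obtain ⟨k, hk⟩ := hFint y hy
    have : (k : ℝ) = n + 1 / 2 := by
      rw [hk] at hy'
      exact mul_right_cancel₀ (by positivity) hy'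
    have h2 : (2 * k : ℝ) = 2 * n + 1 := by linarith
    have h3 : 2 * k = 2 * n + 1 := by exact_mod_cast h2
    omega
  have hlim : ∀ d : ℂ, d ≠ 0 → ¬ SameRay ℝ (p - x) d → ¬ SameRay ℝ d (r - x) →
      Tendsto (fun ε : ℝ => F (x + ε * d)) (𝓝[>] 0)
        (𝓝 (Complex.arg (-((p - x) / d)) + W x + Complex.arg (-(d / (r - x))))) := by
    intro d hd0 hpd hdr
    have hz : Tendsto (fun ε : ℝ => x + ε * d) (𝓝 0) (𝓝 x) := by
      have : Continuous (fun ε : ℝ => x + ε * d) := by fun_prop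
      simpa using this.tendsto 0
    have t1 : Tendsto (fun ε : ℝ => Complex.arg (-((p - (x + ε * d)) / d))) (𝓝 0)
        (𝓝 (Complex.arg (-((p - x) / d)))) := by
      refine (Complex.continuousAt_arg (neg_div_slit hd0 hpd)).tendsto.comp ?_
      exact ((tendsto_const_nhds.sub hz).div_const d).neg
    have t2 : Tendsto (fun ε : ℝ => W (x + ε * d)) (𝓝 0) (𝓝 (W x)) := by
      have hcl : IsClosed K := hK.isClosed
      exact (hW.continuousAt (hcl.isOpen_compl.mem_nhds hxK)).tendsto.comp hz
    have t3 : Tendsto (fun ε : ℝ => Complex.arg (-(d / (r - (x + ε * d))))) (𝓝 0)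
        (𝓝 (Complex.arg (-(d / (r - x))))) := by
      refine (Complex.continuousAt_arg (neg_div_slit hr hdr)).tendsto.comp ?_
      exact (tendsto_const_nhds.div (tendsto_const_nhds.sub hz) hr).neg
    have := ((t1.add t2).add t3).mono_left (nhdsWithin_le_nhds (s := Set.Ioi 0))
    refine this.congr' ?_
    filter_upwards [self_mem_nhdsWithin] with ε hε
    have hε : 0 < ε := hε
    simp only [hF]
    have e1 : (p - (x + ε * d)) / (x - (x + ε * d)) = ((ε⁻¹ : ℝ) : ℂ) * (-((p - (x + ε * d)) / d)) := by
      have : (ε : ℂ) ≠ 0 := by exact_mod_cast hε.ne'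
      push_cast
      field_simp
      ring_nf
    have e2 : (x - (x + ε * d)) / (r - (x + ε * d)) = (ε : ℂ) * (-(d / (r - (x + ε * d)))) := by
      ring
    rw [e1, e2, Complex.arg_real_mul _ (inv_pos.2 hε), Complex.arg_real_mul _ hε]
  have l1 := hlim d hd0 hpd hdr
  have l2 := hlim e he0 hpe her
  have : (fun ε : ℝ => F (x + ε * d)) =ᶠ[𝓝[>] 0] (fun ε : ℝ => F (x + ε * e)) := by
    filter_upwards [hdS, heS] with ε h1 h2
    exact le_antisymm (hle _ h2 _ h1) (hle _ h1 _ h2)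
  have := tendsto_nhds_unique (l1.congr' this) l2
  linarith

theorem phi_div_lt {w v : ℂ} (hw : w ≠ 0) (hv : v ≠ 0) (h : phi w < phi v) :
    phi (w / v) = phi w - phi v + 2 * Real.pi := by
  have h1 := phi_pos w
  have h2 := phi_le v
  have hw' : 0 < ‖w‖ := norm_pos_iff.2 hw
  have hv' : 0 < ‖v‖ := norm_pos_iff.2 hv
  have : w / v = ((‖w‖ / ‖v‖ : ℝ) : ℂ) * Complex.exp (((phi w - phi v + 2 * Real.pi : ℝ) : ℂ) * Complex.I) := by
    conv_lhs => rw [phi_polar (w := w), phi_polar (w := v)]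
    push_cast
    rw [add_mul, sub_mul, Complex.exp_add, Complex.exp_sub, Complex.exp_two_pi_mul_I]
    field_simp
  rw [this]
  exact phi_eq (by positivity) (by linarith) (by linarith)

theorem phi_div_gt {w v : ℂ} (hw : w ≠ 0) (hv : v ≠ 0) (h : phi v < phi w) :
    phi (w / v) = phi w - phi v := by
  have h1 := phi_pos v
  have h2 := phi_le w
  have hw' : 0 < ‖w‖ := norm_pos_iff.2 hw
  have hv' : 0 < ‖v‖ := norm_pos_iff.2 hv
  have : w / v = ((‖w‖ / ‖v‖ : ℝ) : ℂ) * Complex.exp (((phi w - phi v : ℝ) : ℂ) * Complex.I) := by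
    conv_lhs => rw [phi_polar (w := w), phi_polar (w := v)]
    push_cast
    rw [sub_mul, Complex.exp_sub]
    field_simp
  rw [this]
  exact phi_eq (by positivity) (by linarith) (by linarith)

theorem phi_inv {w : ℂ} (hw : w ≠ 0) (h : phi w < 2 * Real.pi) : phi (w⁻¹) = 2 * Real.pi - phi w := by
  have h1 : phi 1 = 2 * Real.pi := by
    have := phi_eq (r := 1) (t := 2 * Real.pi) one_pos (by positivity) le_rfl
    push_cast at this
    rwa [Complex.exp_two_pi_mul_I, mul_one] at this
  have := phi_div_gt one_ne_zero hw (by rw [h1]; exact h)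
  rwa [h1, one_div] at this

theorem sameRay_div {a b p : ℂ} (hp : p ≠ 0) (h : SameRay ℝ (a / p) (b / p)) : SameRay ℝ a b := by
  have := h.map (LinearMap.mulLeft ℝ p)
  simp only [LinearMap.mulLeft_apply] at this
  rwa [mul_div_cancel₀ _ hp, mul_div_cancel₀ _ hp] at this

theorem wind_contra {p r d e : ℂ} (hp : p ≠ 0) (hr : r ≠ 0) (hd : d ≠ 0) (he : e ≠ 0)
    (hpd : ¬ SameRay ℝ p d) (hpe : ¬ SameRay ℝ p e)
    (h1 : phi (d / p) < phi (r / p)) (h2 : phi (r / p) < phi (e / p))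
    (h : Complex.arg (-(p / d)) + Complex.arg (-(d / r)) =
      Complex.arg (-(p / e)) + Complex.arg (-(e / r))) : False := by
  have hlt : ∀ d : ℂ, d ≠ 0 → ¬ SameRay ℝ p d → phi (p / d) = 2 * Real.pi - phi (d / p) := by
    intro d hd hpd
    rw [← phi_inv (div_ne_zero hd hp), inv_div]
    apply phi_lt_of
    intro hs
    rw [← div_self hp] at hs
    exact hpd (sameRay_div hp hs).symm
  have e1 := hlt d hd hpd
  have e2 := hlt e he hpe
  have e3 := phi_div_lt (div_ne_zero hd hp) (div_ne_zero hr hp) h1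
  have e4 := phi_div_gt (div_ne_zero he hp) (div_ne_zero hr hp) h2
  rw [div_div_div_cancel_right₀ hp] at e3 e4
  unfold phi at e1 e2 e3 e4
  have := Real.pi_pos
  linarith

end Str14


namespace Str14
open Filter Topology

variable {V : Type} {W W' : Set V} {E E' : Set (Sym2 V)} {pos : V → ℂ} {A : Sym2 V → Set ℂ}

theorem not_PP_K5 {S : Set V} (hK : ∀ u ∈ S, ∀ v ∈ S, u ≠ v → s(u, v) ∈ E) {x p a b c : V}
    (hx : x ∈ S) (hp : p ∈ S) (ha : a ∈ S) (hb : b ∈ S) (hc : c ∈ S)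
    (hxp : x ≠ p) (hxa : x ≠ a) (hxb : x ≠ b) (hxc : x ≠ c) (hpa : p ≠ a) (hpb : p ≠ b)
    (hpc : p ≠ c) (hab : a ≠ b) (hac : a ≠ c) (hbc : b ≠ c) : ¬ PP E := by
  rintro ⟨W, pos, A, h⟩
  have hvt : ∀ w ∈ S, w ∈ W := by
    intro w hw
    by_cases hwx : w = x
    · exact h.sub _ (hK w hw p hp (by rw [hwx]; exact hxp)) w (by simp)
    · exact h.sub _ (hK w hw x hx hwx) w (by simp)
  have hall : ∀ w, ∃ m B, w ∈ S → x ≠ w → pos x ≠ m ∧ pos w ∉ segment ℝ (pos x) m ∧ SPL m (pos w) B ∧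
      segment ℝ (pos x) m ∩ B ⊆ {m} ∧ A s(x, w) = segment ℝ (pos x) m ∪ B ∧ pos x ∉ B := by
    intro w
    by_cases hw : w ∈ S ∧ x ≠ w
    · have hne : pos x ≠ pos w := fun hh => hw.2 (h.inj (hvt x hx) (hvt w hw.1) hh)
      obtain ⟨m, B, hmB⟩ := (h.spl x w (hK x hx w hw.1 hw.2)).destruct' hne
      exact ⟨m, B, fun _ _ => hmB⟩
    · exact ⟨0, ∅, fun hw1 hw2 => absurd ⟨hw1, hw2⟩ hw⟩
  choose n B hn using hall
  -- disjointness
  have hdis : ∀ u ∈ S, ∀ v ∈ S, u ≠ v → ∀ u' ∈ S, ∀ v' ∈ S, u' ≠ v' → u ≠ u' → u ≠ v' → v ≠ u' →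
      v ≠ v' → ∀ y ∈ A s(u, v), y ∉ A s(u', v') := by
    intro u hu v hv huv u' hu' v' hv' huv' h1 h2 h3 h4 y hy hy'
    obtain ⟨w, hw1, hw2, -⟩ := h.inter _ (hK u hu v hv huv) _ (hK u' hu' v' hv' huv') (by
      intro hh; rcases Sym2.eq_iff.1 hh with hh | hh
      exacts [h1 hh.1, h2 hh.1]) y hy hy'
    rcases Sym2.mem_iff.1 hw1 with rfl | rfl <;> rcases Sym2.mem_iff.1 hw2 with rfl | rfl
    exacts [h1 rfl, h2 rfl, h3 rfl, h4 rfl]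
  have hcross : ∀ v ∈ S, x ≠ v → ∀ v' ∈ S, x ≠ v' → v ≠ v' → ∀ y ∈ A s(x, v), y ∈ A s(x, v') →
      y = pos x := by
    intro v hv hxv v' hv' hxv' hvv y hy hy'
    obtain ⟨w, hw1, hw2, rfl⟩ := h.inter _ (hK x hx v hv hxv) _ (hK x hx v' hv' hxv') (by
      intro hh; rcases Sym2.eq_iff.1 hh with hh | hh
      exacts [hvv hh.2, hxv' hh.1]) y hy hy'
    rcases Sym2.mem_iff.1 hw1 with rfl | rfl
    · rfl
    · rcases Sym2.mem_iff.1 hw2 with rfl | rfl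
      exacts [rfl, absurd rfl hvv]
  have hxnot : ∀ u ∈ S, ∀ v ∈ S, u ≠ v → x ≠ u → x ≠ v → pos x ∉ A s(u, v) := by
    intro u hu v hv huv h1 h2 hh
    rcases Sym2.mem_iff.1 (h.vert _ (hK u hu v hv huv) x (hvt x hx) hh) with rfl | rfl
    exacts [h1 rfl, h2 rfl]
  have hsegA : ∀ w ∈ S, x ≠ w → segment ℝ (pos x) (n w) ⊆ A s(x, w) := fun w hw hxw => by
    rw [(hn w hw hxw).2.2.2.2.1]; exact Set.subset_union_left
  have hBA : ∀ w ∈ S, x ≠ w → B w ⊆ A s(x, w) := fun w hw hxw => by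
    rw [(hn w hw hxw).2.2.2.2.1]; exact Set.subset_union_right
  have hray : ∀ w ∈ S, x ≠ w → ∀ w' ∈ S, x ≠ w' → w ≠ w' →
      ¬ SameRay ℝ (n w - pos x) (n w' - pos x) := by
    intro w hw hxw w' hw' hxw' hww
    exact not_sameRay (hn w hw hxw).1 (hn w' hw' hxw').1 fun y hy =>
      hcross w hw hxw w' hw' hxw' hww y (hsegA w hw hxw hy.1) (hsegA w' hw' hxw' hy.2)
  have h0 : ∀ w ∈ S, x ≠ w → n w - pos x ≠ 0 := fun w hw hxw => sub_ne_zero.2 (hn w hw hxw).1.symm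
  set φ : V → ℝ := fun w => phi ((n w - pos x) / (n p - pos x)) with hφ
  have core : ∀ q ∈ S, ∀ r ∈ S, ∀ s ∈ S, x ≠ q → x ≠ r → x ≠ s → p ≠ q → p ≠ r → p ≠ s → q ≠ r →
      q ≠ s → r ≠ s → φ q < φ r → φ r < φ s → False := by
    intro q hq r hr s hs xq xr xs pq pr ps qr qs rs h1 h2
    have hKc : CH (n p) (n r) (B p ∪ (A s(p, r) ∪ B r)) :=
      (hn p hp hxp).2.2.1.toCH.trans
        ((h.spl p r (hK p hp r hr pr)).toCH.trans (hn r hr xr).2.2.1.symm.toCH)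
    have hxK : pos x ∉ (B p ∪ (A s(p, r) ∪ B r)) := by
      rintro (hh | hh | hh)
      · exact (hn p hp hxp).2.2.2.2.2 hh
      · exact hxnot p hp r hr pr hxp xr hh
      · exact (hn r hr xr).2.2.2.2.2 hh
    have hpx : ∀ w ∈ S, x ≠ w → pos w ∈ A s(x, w) \ {pos x} := fun w hw hxw =>
      ⟨h.pos_mem (hK x hx w hw hxw) (by simp), fun hh =>
        hxw (h.inj (hvt x hx) (hvt w hw) hh.symm)⟩
    have hpre : ∀ w ∈ S, x ≠ w → IsPreconnected (A s(x, w) \ {pos x}) := fun w hw hxw =>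
      (h.spl x w (hK x hx w hw hxw)).diff_preconnected fun hh => hxw (h.inj (hvt x hx) (hvt w hw) hh)
    have hpc : IsPreconnected ((A s(x, q) \ {pos x}) ∪ A s(q, s) ∪ (A s(x, s) \ {pos x})) := by
      refine IsPreconnected.union (pos s) (Or.inr (h.pos_mem (hK q hq s hs qs) (by simp)))
        (hpx s hs xs) ?_ (hpre s hs xs)
      exact IsPreconnected.union (pos q) (hpx q hq xq) (h.pos_mem (hK q hq s hs qs) (by simp))
        (hpre q hq xq) (h.spl q s (hK q hq s hs qs)).isPreconnected
    have hpR : ∀ z ∈ ((A s(x, q) \ {pos x}) ∪ A s(q, s) ∪ (A s(x, s) \ {pos x})),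
        z ∉ A s(x, p) ∧ z ∉ A s(p, r) ∧ z ∉ A s(x, r) := by
      rintro z ((⟨hz, hzx⟩ | hz) | ⟨hz, hzx⟩)
      · exact ⟨fun hh => hzx (hcross q hq xq p hp hxp pq.symm z hz hh),
          hdis x hx q hq xq p hp r hr pr hxp xr pq.symm qr z hz,
          fun hh => hzx (hcross q hq xq r hr xr qr z hz hh)⟩
      · exact ⟨hdis q hq s hs qs x hx p hp hxp xq.symm pq.symm xs.symm ps.symm z hz,
          hdis q hq s hs qs p hp r hr pr pq.symm qr ps.symm rs.symm z hz,
          hdis q hq s hs qs x hx r hr xr xq.symm qr xs.symm rs.symm z hz⟩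
      · exact ⟨fun hh => hzx (hcross s hs xs p hp hxp ps.symm z hz hh),
          hdis x hx s hs xs p hp r hr pr hxp xr ps.symm rs.symm z hz,
          fun hh => hzx (hcross s hs xs r hr xr rs.symm z hz hh)⟩
    have hnear : ∀ w ∈ S, x ≠ w → ∀ᶠ ε : ℝ in 𝓝[>] 0, pos x + ε * (n w - pos x) ∈ A s(x, w) \ {pos x} := by
      intro w hw hxw
      filter_upwards [Ioc_mem_nhdsGT (show (0 : ℝ) < 1 by norm_num)] with ε hε
      refine ⟨hsegA w hw hxw ?_, ?_⟩
      · rw [segment_eq_image']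
        exact ⟨ε, ⟨hε.1.le, hε.2⟩, by simp⟩
      · simp [h0 w hw hxw, hε.1.ne']
    refine wind_contra (h0 p hp hxp) (h0 r hr xr) (h0 q hq xq) (h0 s hs xs)
      (hray p hp hxp q hq xq pq) (hray p hp hxp s hs xs ps) h1 h2 ?_
    refine hKc.wind_eq hxK hpc ?_ (h0 p hp hxp) (h0 r hr xr) (h0 q hq xq) (h0 s hs xs)
      (hray p hp hxp q hq xq pq) (hray p hp hxp s hs xs ps)
      (hray q hq xq r hr xr qr) (hray s hs xs r hr xr rs.symm) ?_ ?_
    · intro z hz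
      obtain ⟨e1, e2, e3⟩ := hpR z hz
      refine ⟨fun hh => e1 (hsegA p hp hxp hh), ?_, fun hh => e3 (hsegA r hr xr hh)⟩
      rintro (hh | hh | hh)
      exacts [e1 (hBA p hp hxp hh), e2 hh, e3 (hBA r hr xr hh)]
    · filter_upwards [hnear q hq xq] with ε hε using Or.inl (Or.inl hε)
    · filter_upwards [hnear s hs xs] with ε hε using Or.inr hε
  have hφne : ∀ w ∈ S, x ≠ w → ∀ w' ∈ S, x ≠ w' → w ≠ w' → φ w ≠ φ w' := by
    intro w hw hxw w' hw' hxw' hww hh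
    exact hray w hw hxw w' hw' hxw' hww (sameRay_div (h0 p hp hxp) (phi_inj hh))
  rcases (hφne a ha hxa b hb hxb hab).lt_or_gt with h1 | h1 <;>
  rcases (hφne a ha hxa c hc hxc hac).lt_or_gt with h2 | h2 <;>
  rcases (hφne b hb hxb c hc hxc hbc).lt_or_gt with h3 | h3
  · exact core a ha b hb c hc hxa hxb hxc hpa hpb hpc hab hac hbc h1 h3
  · exact core a ha c hc b hb hxa hxc hxb hpa hpc hpb hac hab hbc.symm h2 h3
  · linarith
  · exact core c hc a ha b hb hxc hxa hxb hpc hpa hpb hac.symm hbc.symm hab h2 h1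
  · exact core b hb a ha c hc hxb hxa hxc hpb hpa hpc hab.symm hbc hac h1 h2
  · linarith
  · exact core b hb c hc a ha hxb hxc hxa hpb hpc hpa hbc hab.symm hac.symm h3 h2
  · exact core c hc b hb a ha hxc hxb hxa hpc hpb hpa hbc.symm hac.symm hab.symm h3 h1

end Str14


namespace Str14
open Filter Topology

variable {V : Type} {W W' : Set V} {E E' : Set (Sym2 V)} {pos : V → ℂ} {A : Sym2 V → Set ℂ}

theorem vt_finite (h : E.Finite) : (vt E).Finite := by
  have : vt E = ⋃ e ∈ E, {w | w ∈ e} := by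
    ext w; simp [vt]
  rw [this]
  refine h.biUnion fun e _ => ?_
  induction e using Sym2.inductionOn with
  | hf a b =>
    refine (Set.toFinite {a, b}).subset fun w hw => ?_
    simpa using hw

theorem PP.finite (h : PP E) : E.Finite := by
  obtain ⟨_, _, _, h⟩ := h
  exact h.fin

theorem PP.nd (h : PP E) {u v : V} (he : s(u, v) ∈ E) : u ≠ v := by
  obtain ⟨_, _, _, h⟩ := h
  exact h.nd u v he

theorem vt_insert_sub {a b : V} {F : Set (Sym2 V)} {X : Set V} (ha : a ∈ X) (hb : b ∈ X)
    (hF : vt F ⊆ X) : vt (insert s(a, b) F) ⊆ X := by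
  rintro w ⟨e, rfl | he, hw⟩
  · rcases Sym2.mem_iff.1 hw with rfl | rfl <;> assumption
  · exact hF ⟨e, he, hw⟩

theorem claim [Infinite V] (h : PP E) {u v : V} (huv : u ≠ v) (hne : s(u, v) ∉ E) :
    ∃ E', E ⊆ E' ∧ PP E' ∧ ¬ PP (insert s(u, v) E') := by
  by_cases hpl : PP (insert s(u, v) E)
  swap
  · exact ⟨E, subset_rfl, h, hpl⟩
  obtain ⟨a₁, ha₁⟩ := (vt_finite hpl.finite).infinite_compl.nonempty
  have hu0 : u ∈ vt (insert s(u, v) E) := ⟨_, Or.inl rfl, by simp⟩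
  have hv0 : v ∈ vt (insert s(u, v) E) := ⟨_, Or.inl rfl, by simp⟩
  have hp1 := hpl.pendant hu0 ha₁
  obtain ⟨a₂, ha₂⟩ := (vt_finite hp1.finite).infinite_compl.nonempty
  have hu1 : u ∈ vt (insert s(u, a₁) (insert s(u, v) E)) := ⟨_, Or.inl rfl, by simp⟩
  have hp2 := hp1.pendant hu1 ha₂
  have hva₁ : v ≠ a₁ := fun hh => ha₁ (hh ▸ hv0)
  have hva₂ : v ≠ a₂ := fun hh => ha₂ ⟨s(u, v), by simp, by simp [hh]⟩
  have ha12 : a₁ ≠ a₂ := fun hh => ha₂ ⟨s(u, a₁), by simp, by simp [hh]⟩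
  set H₀ := insert s(u, a₂) (insert s(u, a₁) E) with hH₀
  set X := insert s(u, a₂) (insert s(u, a₁) (insert s(u, v) E)) with hX
  have hH₀X : H₀ ⊆ X := by
    rintro e (he | he | he)
    exacts [Or.inl he, Or.inr (Or.inl he), Or.inr (Or.inr (Or.inr he))]
  have hWfin : (vt X).Finite := vt_finite hp2.finite
  have huX : u ∈ vt X := ⟨_, Or.inl rfl, by simp⟩
  have hvX : v ∈ vt X := ⟨s(u, v), by simp [X], by simp⟩
  set T : Set (Sym2 V) := {t | ∀ w ∈ t, w ∈ vt X} with hT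
  have hTfin : T.Finite := by
    refine ((hWfin.prod hWfin).image (fun q => s(q.1, q.2))).subset ?_
    intro t ht
    induction t using Sym2.inductionOn with
    | hf a b => exact ⟨(a, b), ⟨ht a (by simp), ht b (by simp)⟩, rfl⟩
  have hsv : ∀ {w}, v ≠ w → s(u, v) ≠ s(u, w) := by
    intro w hw hh
    rcases Sym2.eq_iff.1 hh with hh | hh
    exacts [hw hh.2, huv hh.2.symm]
  obtain ⟨F, ⟨hF1, hF2, hF3, hF4⟩, hmax⟩ := Set.exists_max_image
    {F : Set (Sym2 V) | H₀ ⊆ F ∧ s(u, v) ∉ F ∧ PP F ∧ F ⊆ T} Set.ncard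
    (hTfin.finite_subsets.subset fun F hF => hF.2.2.2)
    ⟨H₀, subset_rfl, by
      rintro (hh | hh | hh)
      exacts [hsv hva₂ hh, hsv hva₁ hh, hne hh], hp2.mono hH₀X, fun e he w hw => ⟨e, hH₀X he, hw⟩⟩
  by_cases hFe : PP (insert s(u, v) F)
  swap
  · exact ⟨F, fun e he => hF1 (Or.inr (Or.inr he)), hF3, hFe⟩
  have hvF : vt (insert s(u, v) F) ⊆ vt X :=
    vt_insert_sub huX hvX fun w ⟨e, he, hw⟩ => hF4 he w hw
  obtain ⟨ζ, hζ⟩ := hWfin.infinite_compl.nonempty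
  have hζF : ζ ∉ vt F := fun ⟨e, he, hw⟩ => hζ (hvF ⟨e, Or.inr he, hw⟩)
  obtain ⟨x, y, hxy, hxv, hyv, hx, hy, hPP⟩ := hFe.gadget (ζ := ζ) (Or.inl rfl)
    (Or.inr (hF1 (Or.inr (Or.inl rfl)))) (Or.inr (hF1 (Or.inl rfl))) ha12 hva₁.symm hva₂.symm
    (fun hh => hζ (hvF hh))
  rw [show insert s(u, v) F \ {s(u, v)} = F by
    ext e; simp only [Set.mem_diff, Set.mem_insert_iff, Set.mem_singleton_iff]
    constructor
    · rintro ⟨rfl | h1, h2⟩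
      exacts [absurd rfl h2, h1]
    · intro he; exact ⟨Or.inr he, by rintro rfl; exact hF2 he⟩] at hPP
  have hux := hFe.nd hx
  have huy := hFe.nd hy
  have hxX : x ∈ vt X := hvF ⟨_, hx, by simp⟩
  have hyX : y ∈ vt X := hvF ⟨_, hy, by simp⟩
  replace hx : s(u, x) ∈ F := hx.resolve_left (hsv hxv.symm).symm
  replace hy : s(u, y) ∈ F := hy.resolve_left (hsv hyv.symm).symm
  have hmem : ∀ a b, a ∈ vt X → b ∈ vt X → a ≠ b → s(u, v) ≠ s(a, b) →
      PP (insert s(ζ, a) (insert s(ζ, b) F)) → s(a, b) ∈ F := by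
    intro a b ha hb hab hne hP
    by_contra hmem
    have h1 := hmax (insert s(a, b) F) ⟨hF1.trans (Set.subset_insert _ _), by
      rintro (hh | hh)
      exacts [hne hh, hF2 hh], hP.merge hζF hab, by
      rintro e (rfl | he) w hw
      · rcases Sym2.mem_iff.1 hw with rfl | rfl <;> assumption
      · exact hF4 he w hw⟩
    rw [Set.ncard_insert_of_notMem hmem (hTfin.subset hF4)] at h1
    omega
  have hvx : s(v, x) ∈ F := hmem v x hvX hxX hxv.symm (by
    intro hh; rcases Sym2.eq_iff.1 hh with hh | hh
    exacts [huv hh.1, hux hh.1]) (hPP.mono (by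
      rintro e (rfl | rfl | he) <;> simp [*]))
  have hvy : s(v, y) ∈ F := hmem v y hvX hyX hyv.symm (by
    intro hh; rcases Sym2.eq_iff.1 hh with hh | hh
    exacts [huv hh.1, huy hh.1]) (hPP.mono (by
      rintro e (rfl | rfl | he) <;> simp [*]))
  have hxy' : s(x, y) ∈ F := hmem x y hxX hyX hxy (by
    intro hh; rcases Sym2.eq_iff.1 hh with hh | hh
    exacts [hux hh.1, huy hh.1]) (hPP.mono (by
      rintro e (rfl | rfl | he) <;> simp [*]))
  refine ⟨_, ?_, hPP, ?_⟩
  · intro e he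
    exact Or.inr (Or.inr (Or.inr (Or.inr (hF1 (Or.inr (Or.inr he))))))
  · have nζ : ∀ w ∈ vt X, w ≠ ζ := by rintro w hw rfl; exact hζ hw
    refine not_PP_K5 (S := {u, v, x, y, ζ}) (x := u) (p := v) (a := x) (b := y) (c := ζ) ?_ (by simp)
      (by simp) (by simp) (by simp) (by simp) huv hux huy (nζ u huX) hxv.symm hyv.symm (nζ v hvX)
      hxy (nζ x hxX) (nζ y hyX)
    have hx' : s(x, u) ∈ F := by rw [Sym2.eq_swap]; exact hx
    have hy' : s(y, u) ∈ F := by rw [Sym2.eq_swap]; exact hy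
    have hvx' : s(x, v) ∈ F := by rw [Sym2.eq_swap]; exact hvx
    have hvy' : s(y, v) ∈ F := by rw [Sym2.eq_swap]; exact hvy
    have hyx' : s(y, x) ∈ F := by rw [Sym2.eq_swap]; exact hxy'
    intro a ha b hb hab
    simp only [Set.mem_insert_iff, Set.mem_singleton_iff] at ha hb
    rcases ha with rfl | rfl | rfl | rfl | rfl <;> rcases hb with rfl | rfl | rfl | rfl | rfl <;>
      first
      | exact absurd rfl hab
      | exact Or.inr (Or.inr (Or.inr (Or.inr (Or.inr (by assumption)))))
      | simp [Sym2.eq_swap]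

end Str14


namespace Str14
open Filter Topology

theorem mid {γ : ℝ → ℂ} (hγ : ContinuousOn γ (Set.Icc 0 1)) {p q : ℂ} (h0 : γ 0 = p) (h1 : γ 1 = q)
    {r : ℝ} (hr : 0 < r) (hpq : 2 * r < dist p q) :
    ∃ M P Q, M ⊆ γ '' Set.Icc 0 1 ∧ IsCompact M ∧ IsPreconnected M ∧ P ∈ M ∧ Q ∈ M ∧
      dist P p = r ∧ dist Q q = r ∧ M ∩ Metric.closedBall p r ⊆ {P} ∧
      M ∩ Metric.closedBall q r ⊆ {Q} := by
  have hdis : ∀ y, dist y p ≤ r → r < dist y q := by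
    intro y hy
    have := dist_triangle p y q
    rw [dist_comm p y] at this
    linarith
  have hc1 : ContinuousOn (fun t => dist (γ t) p) (Set.Icc 0 1) := 
    continuous_dist.comp_continuousOn (hγ.prodMk continuousOn_const)
  have hc2 : ContinuousOn (fun t => dist (γ t) q) (Set.Icc 0 1) := 
    continuous_dist.comp_continuousOn (hγ.prodMk continuousOn_const)
  have hT0 : IsCompact (Set.Icc (0 : ℝ) 1 ∩ (fun t => dist (γ t) p) ⁻¹' Set.Iic r) :=
    isCompact_Icc.of_isClosed_subset (hc1.preimage_isClosed_of_isClosed isClosed_Icc isClosed_Iic)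
      Set.inter_subset_left
  obtain ⟨t₀, ⟨ht₀, ht₀r⟩, hmax⟩ := hT0.exists_isGreatest ⟨0, by simp, by simp [h0, hr.le]⟩
  have ht₀r : dist (γ t₀) p ≤ r := ht₀r
  have hsub0 : Set.Icc t₀ 1 ⊆ Set.Icc 0 1 := Set.Icc_subset_Icc_left ht₀.1
  have hT1 : IsCompact (Set.Icc t₀ 1 ∩ (fun t => dist (γ t) q) ⁻¹' Set.Iic r) :=
    isCompact_Icc.of_isClosed_subset
      ((hc2.mono hsub0).preimage_isClosed_of_isClosed isClosed_Icc isClosed_Iic)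
      Set.inter_subset_left
  obtain ⟨t₁, ⟨ht₁, ht₁r⟩, hmin⟩ := hT1.exists_isLeast ⟨1, by simp [ht₀.2], by simp [h1, hr.le]⟩
  have ht₁r : dist (γ t₁) q ≤ r := ht₁r
  have hsub1 : Set.Icc t₀ t₁ ⊆ Set.Icc 0 1 := (Set.Icc_subset_Icc_right ht₁.2).trans hsub0
  have e0 : dist (γ t₀) p = r := by
    refine le_antisymm ht₀r (not_lt.1 fun hlt => ?_)
    obtain ⟨t, ht, hteq⟩ := intermediate_value_Icc ht₀.2 (hc1.mono hsub0)
      (show r ∈ Set.Icc (dist (γ t₀) p) (dist (γ 1) p) from ⟨hlt.le, by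
        rw [h1, dist_comm]; linarith⟩)
    have : t ≤ t₀ := hmax ⟨hsub0 ht, le_of_eq hteq⟩
    have : t = t₀ := le_antisymm this ht.1
    subst this
    exact hlt.ne hteq
  have e1 : dist (γ t₁) q = r := by
    refine le_antisymm ht₁r (not_lt.1 fun hlt => ?_)
    obtain ⟨t, ht, hteq⟩ := intermediate_value_Icc' ht₁.1 (hc2.mono hsub1)
      (show r ∈ Set.Icc (dist (γ t₁) q) (dist (γ t₀) q) from ⟨hlt.le, (hdis _ ht₀r).le⟩)
    have : t₁ ≤ t := hmin ⟨⟨ht.1, ht.2.trans ht₁.2⟩, le_of_eq hteq⟩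
    have : t = t₁ := le_antisymm ht.2 this
    subst this
    exact hlt.ne hteq
  refine ⟨γ '' Set.Icc t₀ t₁, γ t₀, γ t₁, Set.image_mono hsub1, isCompact_Icc.image_of_continuousOn (hγ.mono hsub1),
    isPreconnected_Icc.image _ (hγ.mono hsub1), ⟨t₀, ⟨le_rfl, ht₁.1⟩, rfl⟩, ⟨t₁, ⟨ht₁.1, le_rfl⟩, rfl⟩,
    e0, e1, ?_, ?_⟩
  · rintro _ ⟨⟨t, ht, rfl⟩, hy⟩
    have : t ≤ t₀ := hmax ⟨hsub1 ht, hy⟩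
    rw [le_antisymm this ht.1]; rfl
  · rintro _ ⟨⟨t, ht, rfl⟩, hy⟩
    have : t₁ ≤ t := hmin ⟨⟨ht.1, ht.2.trans ht₁.2⟩, hy⟩
    rw [le_antisymm ht.2 this]; rfl

theorem chain_thick {M : Set ℂ} (hM : IsPreconnected M) {δ : ℝ} (hδ : 0 < δ) {a b : ℂ} (ha : a ∈ M)
    (hb : b ∈ M) : ∃ K, CH a b K ∧ K ⊆ Metric.thickening δ M := by
  refine hM.induction₂ (fun a b => ∃ K, CH a b K ∧ K ⊆ Metric.thickening δ M) ?_ ?_ ?_ ha hb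
  · intro x hx
    filter_upwards [mem_nhdsWithin_of_mem_nhds (Metric.ball_mem_nhds x hδ)] with y hy
    refine ⟨_, CH.seg x y, fun z hz => Metric.mem_thickening_iff.2 ⟨x, hx, ?_⟩⟩
    exact (convex_ball x δ).segment_subset (Metric.mem_ball_self hδ) hy hz
  · rintro x y z - - - ⟨K, hK, hK'⟩ ⟨L, hL, hL'⟩
    exact ⟨_, hK.trans hL, Set.union_subset hK' hL'⟩
  · rintro x y - - ⟨K, hK, hK'⟩
    exact ⟨K, hK.symm, hK'⟩

theorem ev_thick {s t : Set ℂ} (h : Disjoint s t) (hs : IsCompact s) (ht : IsCompact t) :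
    ∀ᶠ δ : ℝ in 𝓝[>] 0, Disjoint (Metric.thickening δ s) (Metric.thickening δ t) := by
  obtain ⟨δ, hδ, hd⟩ := h.exists_thickenings hs ht.isClosed
  filter_upwards [Ioc_mem_nhdsGT hδ] with ε hε
  exact hd.mono (Metric.thickening_mono hε.2 _) (Metric.thickening_mono hε.2 _)

theorem seg_sphere {p C y : ℂ} (hy : y ∈ segment ℝ p C) : ∃ t ∈ Set.Icc (0 : ℝ) 1,
    y = p + t * (C - p) ∧ dist y p = t * dist C p := by
  rw [segment_eq_image'] at hy
  obtain ⟨t, ht, rfl⟩ := hy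
  refine ⟨t, ht, by simp, ?_⟩
  simp [dist_eq_norm, abs_of_nonneg ht.1]

theorem seg_sphere2 {p C C' y : ℂ} {r : ℝ} (hr : 0 < r) (h : dist C p = r) (h' : dist C' p = r)
    (hy : y ∈ segment ℝ p C) (hy' : y ∈ segment ℝ p C') (hne : y ≠ p) : C = C' := by
  obtain ⟨t, ht, e1, d1⟩ := seg_sphere hy
  obtain ⟨t', ht', e2, d2⟩ := seg_sphere hy'
  have : t = t' := by
    rw [h] at d1; rw [h'] at d2
    exact mul_right_cancel₀ hr.ne' (d1.symm.trans d2)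
  subst this
  have ht0 : (t : ℂ) ≠ 0 := by
    intro h0; rw [h0] at e1; exact hne (by simpa using e1)
  have : (t : ℂ) * (C - p) = t * (C' - p) := by
    rw [e1] at e2; exact add_left_cancel e2
  have := mul_left_cancel₀ ht0 this
  exact sub_left_injective this

variable {V : Type}

theorem poly {W : Set V} {E : Set (Sym2 V)} {pos : V → ℂ} {Γ : Sym2 V → Set ℂ} (hE : E.Finite)
    (hW : W.Finite) (sub : ∀ e ∈ E, ∀ w ∈ e, w ∈ W) (nd : ∀ u v, s(u, v) ∈ E → u ≠ v)
    (inj : Set.InjOn pos W)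
    (hΓ : ∀ e ∈ E, ∃ u v γ, e = s(u, v) ∧ ContinuousOn γ (Set.Icc (0 : ℝ) 1) ∧ γ 0 = pos u ∧
      γ 1 = pos v ∧ γ '' Set.Icc 0 1 = Γ e)
    (inter : ∀ e ∈ E, ∀ f ∈ E, e ≠ f → ∀ y ∈ Γ e, y ∈ Γ f → ∃ w, w ∈ e ∧ w ∈ f ∧ pos w = y)
    (vert : ∀ e ∈ E, ∀ w ∈ W, pos w ∈ Γ e → w ∈ e) : PP E := by
  classical
  have hΓc : ∀ e ∈ E, IsCompact (Γ e) := by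
    intro e he
    obtain ⟨u, v, γ, -, hc, -, -, hi⟩ := hΓ e he
    rw [← hi]; exact isCompact_Icc.image_of_continuousOn hc
  -- choice of the radius
  have ev1 : ∀ᶠ r : ℝ in 𝓝[>] 0, ∀ w ∈ W, ∀ w' ∈ W, w ≠ w' → 2 * r < dist (pos w) (pos w') := by
    rw [hW.eventually_all]; intro w hw
    rw [hW.eventually_all]; intro w' hw'
    by_cases hne : w = w'
    · simp [hne]
    · have hd : 0 < dist (pos w) (pos w') := dist_pos.2 fun hh => hne (inj hw hw' hh)
      filter_upwards [Ioo_mem_nhdsGT (half_pos hd)] with r hr _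
      linarith [hr.2]
  have ev2 : ∀ᶠ r : ℝ in 𝓝[>] 0, ∀ e ∈ E, ∀ w ∈ W, w ∉ e → Metric.closedBall (pos w) r ⊆ (Γ e)ᶜ := by
    rw [hE.eventually_all]; intro e he
    rw [hW.eventually_all]; intro w hw
    by_cases hwe : w ∈ e
    · simp [hwe]
    · have := eventually_closedBall_subset
        ((hΓc e he).isClosed.isOpen_compl.mem_nhds fun hh => hwe (vert e he w hw hh))
      filter_upwards [mem_nhdsWithin_of_mem_nhds this] with r hr _ using hr
  obtain ⟨r, ⟨hr1, hr2⟩, hr0⟩ := ((ev1.and ev2).and self_mem_nhdsWithin).exists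
  have hr0 : 0 < r := hr0
  clear ev1 ev2
  have hmid : ∀ e, ∃ M, ∃ C : V → ℂ, e ∈ E → M ⊆ Γ e ∧ IsCompact M ∧ IsPreconnected M ∧
      ∀ w ∈ e, C w ∈ M ∧ dist (C w) (pos w) = r ∧ M ∩ Metric.closedBall (pos w) r ⊆ {C w} := by
    intro e
    by_cases he : e ∈ E
    swap
    · exact ⟨∅, pos, fun h => absurd h he⟩
    obtain ⟨u, v, γ, rfl, hc, h0, h1, hi⟩ := hΓ e he
    have huv := nd u v he
    obtain ⟨M, P, Q, h1, h2, h3, h4, h5, h6, h7, h8, h9⟩ := mid hc h0 h1 hr0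
      (hr1 u (sub _ he u (by simp)) v (sub _ he v (by simp)) huv)
    refine ⟨M, fun w => if w = u then P else Q, fun _ => ⟨hi ▸ h1, h2, h3, ?_⟩⟩
    intro w hw
    rcases Sym2.mem_iff.1 hw with rfl | rfl
    · beta_reduce; rw [if_pos rfl]; exact ⟨h4, h6, h8⟩
    · beta_reduce; rw [if_neg huv.symm]; exact ⟨h5, h7, h9⟩
  choose M C hMC using hmid
  have hMdis : ∀ e ∈ E, ∀ f ∈ E, e ≠ f → Disjoint (M e) (M f) := by
    intro e he f hf hef
    rw [Set.disjoint_left]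
    intro y hy hy'
    obtain ⟨w, hwe, -, rfl⟩ := inter e he f hf hef y ((hMC e he).1 hy) ((hMC f hf).1 hy')
    obtain ⟨-, h2, h3⟩ := (hMC e he).2.2.2 w hwe
    have : pos w = C e w := h3 ⟨hy, Metric.mem_closedBall_self hr0.le⟩
    rw [← this, dist_self] at h2
    exact hr0.ne h2
  have hMpos : ∀ e ∈ E, ∀ w ∈ W, Disjoint (M e) {pos w} := by
    intro e he w hw
    rw [Set.disjoint_singleton_right]
    intro hy
    have hwe := vert e he w hw ((hMC e he).1 hy)
    obtain ⟨-, h2, h3⟩ := (hMC e he).2.2.2 w hwe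
    have : pos w = C e w := h3 ⟨hy, Metric.mem_closedBall_self hr0.le⟩
    rw [← this, dist_self] at h2
    exact hr0.ne h2
  have hsegball : ∀ f ∈ E, ∀ w ∈ f, segment ℝ (pos w) (C f w) ⊆ Metric.closedBall (pos w) r := by
    intro f hf w hw
    refine (convex_closedBall (pos w) r).segment_subset (Metric.mem_closedBall_self hr0.le) ?_
    exact le_of_eq ((hMC f hf).2.2.2 w hw).2.1
  have hMseg : ∀ e ∈ E, ∀ f ∈ E, e ≠ f → ∀ w ∈ f, Disjoint (M e) (segment ℝ (pos w) (C f w)) := by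
    intro e he f hf hef w hw
    rw [Set.disjoint_left]
    intro y hy hy'
    have hyb := hsegball f hf w hw hy'
    have hwW := sub f hf w hw
    by_cases hwe : w ∈ e
    · obtain ⟨a1, a2, a3⟩ := (hMC e he).2.2.2 w hwe
      obtain ⟨b1, b2, b3⟩ := (hMC f hf).2.2.2 w hw
      have hyC : y = C e w := a3 ⟨hy, hyb⟩
      have : C e w = C f w := by
        refine seg_sphere2 hr0 a2 b2 (right_mem_segment ℝ _ _) (hyC ▸ hy') ?_
        intro hh; rw [hh, dist_self] at a2; exact hr0.ne a2
      exact Set.disjoint_left.1 (hMdis e he f hf hef) a1 (this ▸ b1)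
    · exact hr2 e he w hwW hwe hyb ((hMC e he).1 hy)
  -- choice of the thickness
  have ev1 : ∀ᶠ δ : ℝ in 𝓝[>] 0, ∀ e ∈ E, ∀ f ∈ E, e ≠ f →
      Disjoint (Metric.thickening δ (M e)) (Metric.thickening δ (M f)) := by
    rw [hE.eventually_all]; intro e he
    rw [hE.eventually_all]; intro f hf
    by_cases hef : e = f
    · simp [hef]
    · filter_upwards [ev_thick (hMdis e he f hf hef) (hMC e he).2.1 (hMC f hf).2.1] with δ hδ _ using hδ
  have ev2 : ∀ᶠ δ : ℝ in 𝓝[>] 0, ∀ e ∈ E, ∀ w ∈ W,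
      Disjoint (Metric.thickening δ (M e)) (Metric.thickening δ {pos w}) := by
    rw [hE.eventually_all]; intro e he
    rw [hW.eventually_all]; intro w hw
    exact ev_thick (hMpos e he w hw) (hMC e he).2.1 isCompact_singleton
  have ev3 : ∀ᶠ δ : ℝ in 𝓝[>] 0, ∀ e ∈ E, ∀ f ∈ E, ∀ w ∈ W, e ≠ f → w ∈ f →
      Disjoint (Metric.thickening δ (M e)) (Metric.thickening δ (segment ℝ (pos w) (C f w))) := by
    rw [hE.eventually_all]; intro e he
    rw [hE.eventually_all]; intro f hf
    rw [hW.eventually_all]; intro w hw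
    by_cases hef : e ≠ f ∧ w ∈ f
    · filter_upwards [ev_thick (hMseg e he f hf hef.1 w hef.2) (hMC e he).2.1
        (segment_compact _ _)] with δ hδ _ _ using hδ
    · exact Eventually.of_forall fun δ h1 h2 => absurd ⟨h1, h2⟩ hef
  obtain ⟨δ, ⟨⟨hd1, hd2⟩, hd3⟩, hδ⟩ := (((ev1.and ev2).and ev3).and self_mem_nhdsWithin).exists
  have hδ : 0 < δ := hδ
  have hA : ∀ e, ∃ A, e ∈ E → (∀ u v, e = s(u, v) → SPL (pos u) (pos v) A) ∧
      ∀ y ∈ A, y ∈ Metric.thickening δ (M e) ∨ ∃ w ∈ e, y ∈ segment ℝ (pos w) (C e w) := by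
    intro e
    by_cases he : e ∈ E
    swap
    · exact ⟨∅, fun h => absurd h he⟩
    induction e using Sym2.inductionOn with
    | hf u v =>
      have hu := (hMC _ he).2.2.2 u (by simp)
      have hv := (hMC _ he).2.2.2 v (by simp)
      obtain ⟨K, hK, hK'⟩ := chain_thick (hMC _ he).2.2.1 hδ hu.1 hv.1
      obtain ⟨A, hA, hS⟩ := ((CH.seg (pos u) (C s(u, v) u)).trans
        (hK.trans (CH.seg (pos v) (C s(u, v) v)).symm)).extract
      refine ⟨A, fun _ => ⟨?_, ?_⟩⟩
      · intro a b hab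
        rcases Sym2.eq_iff.1 hab with ⟨rfl, rfl⟩ | ⟨rfl, rfl⟩
        exacts [hS, hS.symm]
      · intro y hy
        rcases hA hy with h | h | h
        · exact Or.inr ⟨u, by simp, h⟩
        · exact Or.inl (hK' h)
        · exact Or.inr ⟨v, by simp, h⟩
  choose A hA using hA
  refine ⟨W, pos, A, hE, sub, nd, inj, fun u v he => (hA _ he).1 u v rfl, ?_, ?_⟩
  · intro e he f hf hef y hy hy'
    rcases (hA e he).2 y hy with h1 | ⟨w, hw, h1⟩ <;> rcases (hA f hf).2 y hy' with h2 | ⟨w', hw', h2⟩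
    · exact absurd h2 (Set.disjoint_left.1 (hd1 e he f hf hef) h1)
    · exact absurd (Metric.self_subset_thickening hδ _ h2)
        (Set.disjoint_left.1 (hd3 e he f hf w' (sub f hf w' hw') hef hw') h1)
    · exact absurd (Metric.self_subset_thickening hδ _ h1)
        (Set.disjoint_left.1 (hd3 f hf e he w (sub e he w hw) hef.symm hw) h2)
    · have hb1 : dist y (pos w) ≤ r := hsegball e he w hw h1
      have hb2 : dist y (pos w') ≤ r := hsegball f hf w' hw' h2
      by_cases hww : w = w'
      · subst hww
        refine ⟨w, hw, hw', ?_⟩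
        by_contra hne
        obtain ⟨a1, a2, a3⟩ := (hMC e he).2.2.2 w hw
        obtain ⟨b1, b2, b3⟩ := (hMC f hf).2.2.2 w hw'
        have := seg_sphere2 hr0 a2 b2 h1 h2 (fun hh => hne hh.symm)
        exact Set.disjoint_left.1 (hMdis e he f hf hef) a1 (this ▸ b1)
      · exfalso
        have := hr1 w (sub e he w hw) w' (sub f hf w' hw') hww
        have := dist_triangle (pos w) y (pos w')
        rw [dist_comm (pos w) y] at this
        linarith
  · intro e he w hw hy
    rcases (hA e he).2 _ hy with h1 | ⟨w', hw', h1⟩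
    · exact absurd (Metric.self_subset_thickening hδ _ (Set.mem_singleton _))
        (Set.disjoint_left.1 (hd2 e he w hw) h1)
    · by_contra hwe
      have hb : dist (pos w) (pos w') ≤ r := hsegball e he w' hw' h1
      have := hr1 w hw w' (sub e he w' hw') (by rintro rfl; exact hwe hw')
      linarith

end Str14


namespace Str14
open Filter Topology

theorem SPL.loop {a b : ℂ} {A : Set ℂ} (h : SPL a b A) (hab : a = b) : A = {a} := by
  cases h with
  | single => rfl
  | cons h1 h2 h3 =>
    subst hab
    exact absurd (h3 ⟨left_mem_segment ℝ _ _, h1.right_mem⟩) h2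

theorem SPL.param {a b : ℂ} {A : Set ℂ} (h : SPL a b A) : a ≠ b →
    ∃ f : ℝ → ℂ, Continuous f ∧ Set.InjOn f (Set.Icc 0 1) ∧ f 0 = a ∧ f 1 = b ∧
      f '' Set.Icc 0 1 = A := by
  induction h with
  | single => intro h; exact absurd rfl h
  | @cons a b c A h1 h2 h3 ih =>
    intro hac
    have hl : Function.Injective (AffineMap.lineMap a b : ℝ → ℂ) := AffineMap.lineMap_injective ℝ h2
    have hlc : Continuous (AffineMap.lineMap a b : ℝ → ℂ) := AffineMap.lineMap_continuous
    by_cases hbc : b = c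
    · have hA := h1.loop hbc
      subst hbc
      refine ⟨AffineMap.lineMap a b, hlc, hl.injOn, by simp, by simp, ?_⟩
      rw [hA, ← segment_eq_image_lineMap, Set.union_eq_left.2]
      simpa using right_mem_segment ℝ a b
    · obtain ⟨g, g1, g2, g3, g4, g5⟩ := ih hbc
      have hseg : ∀ t ∈ Set.Icc (0:ℝ) 1, AffineMap.lineMap a b t ∈ segment ℝ a b := by
        intro t ht; rw [segment_eq_image_lineMap]; exact ⟨t, ht, rfl⟩
      have hgA : ∀ t ∈ Set.Icc (0:ℝ) 1, g t ∈ A := by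
        intro t ht; rw [← g5]; exact ⟨t, ht, rfl⟩
      have key : ∀ x ∈ Set.Icc (0:ℝ) 1, ∀ y ∈ Set.Icc (0:ℝ) 1, x ≤ 1 / 2 → ¬ y ≤ 1 / 2 →
          AffineMap.lineMap a b (2 * x) ≠ g (2 * y - 1) := by
        intro x hx y hy hx2 hy2 he
        have hy3 : 2 * y - 1 ∈ Set.Icc (0:ℝ) 1 := ⟨by linarith, by linarith [hy.2]⟩
        have h4 := hseg (2 * x) ⟨by linarith [hx.1], by linarith⟩
        have h5 := hgA _ hy3
        have h6 : g (2 * y - 1) = b := h3 ⟨he ▸ h4, h5⟩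
        have := g2 hy3 ⟨le_rfl, zero_le_one⟩ (h6.trans g3.symm)
        linarith
      refine ⟨fun t => if t ≤ 1 / 2 then AffineMap.lineMap a b (2 * t) else g (2 * t - 1),
        ?_, ?_, ?_, ?_, ?_⟩
      · refine Continuous.if_le (hlc.comp (by fun_prop)) (g1.comp (by fun_prop)) continuous_id
          continuous_const ?_
        intro x hx
        have hx : x = 1 / 2 := hx
        subst hx
        norm_num [g3]
      · intro x hx y hy he
        by_cases hx2 : x ≤ 1 / 2 <;> by_cases hy2 : y ≤ 1 / 2
        · simp only [if_pos hx2, if_pos hy2] at he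
          linarith [hl he]
        · simp only [if_pos hx2, if_neg hy2] at he
          exact absurd he (key x hx y hy hx2 hy2)
        · simp only [if_neg hx2, if_pos hy2] at he
          exact absurd he.symm (key y hy x hx hy2 hx2)
        · simp only [if_neg hx2, if_neg hy2] at he
          have := g2 ⟨by linarith, by linarith [hx.2]⟩ ⟨by linarith, by linarith [hy.2]⟩ he
          linarith
      · simp
      · norm_num [g4]
      · apply Set.Subset.antisymm
        · rintro _ ⟨t, ht, rfl⟩
          by_cases ht2 : t ≤ 1 / 2
          · simp only [if_pos ht2]
            exact Or.inl (hseg _ ⟨by linarith [ht.1], by linarith⟩)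
          · simp only [if_neg ht2]
            exact Or.inr (hgA _ ⟨by linarith, by linarith [ht.2]⟩)
        · rintro y (hy | hy)
          · rw [segment_eq_image_lineMap] at hy
            obtain ⟨t, ht, rfl⟩ := hy
            refine ⟨t / 2, ⟨by linarith [ht.1], by linarith [ht.2]⟩, ?_⟩
            have : t / 2 ≤ 1 / 2 := by linarith [ht.2]
            simp only [if_pos this]
            congr 1; ring
          · rw [← g5] at hy
            obtain ⟨t, ht, rfl⟩ := hy
            rcases ht.1.eq_or_lt with h0 | h0
            · refine ⟨1 / 2, ⟨by norm_num, by norm_num⟩, ?_⟩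
              rw [← h0, g3]
              norm_num
            · refine ⟨(t + 1) / 2, ⟨by linarith, by linarith [ht.2]⟩, ?_⟩
              have : ¬ (t + 1) / 2 ≤ 1 / 2 := by intro h; linarith
              simp only [if_neg this]
              congr 1; ring

section Edges
variable {V : Type} [DecidableEq V]

theorem exists_symE (e : {e : Finset V // e.card = 2}) : ∃ z : Sym2 V, ∀ w, w ∈ z ↔ w ∈ e.1 := by
  obtain ⟨u, v, -, h⟩ := Finset.card_eq_two.1 e.2
  exact ⟨s(u, v), fun w => by rw [h]; simp⟩

noncomputable def symE (e : {e : Finset V // e.card = 2}) : Sym2 V := (exists_symE e).choose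

theorem mem_symE {e : {e : Finset V // e.card = 2}} {w : V} : w ∈ symE e ↔ w ∈ e.1 :=
  (exists_symE e).choose_spec w

theorem symE_inj : Function.Injective (symE (V := V)) := by
  intro e f h
  apply Subtype.ext
  ext w
  rw [← mem_symE, h, mem_symE]

theorem symE_eq {e : {e : Finset V // e.card = 2}} {u v : V} (h : e.1 = {u, v}) :
    symE e = s(u, v) := by
  apply Sym2.ext
  intro w
  rw [mem_symE, h]; simp

theorem symE_nd {e : {e : Finset V // e.card = 2}} {u v : V} (h : symE e = s(u, v)) : u ≠ v := by
  rintro rfl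
  obtain ⟨x, y, hxy, h'⟩ := Finset.card_eq_two.1 e.2
  rw [symE_eq h'] at h
  simp at h
  exact hxy (h.1.trans h.2.symm)

theorem symE_surj {u v : V} (h : u ≠ v) : ∃ e, symE e = s(u, v) :=
  ⟨⟨{u, v}, Finset.card_pair h⟩, symE_eq rfl⟩

def toSym (G : Finset {e : Finset V // e.card = 2}) : Set (Sym2 V) :=
  symE '' (G : Set {e : Finset V // e.card = 2})
end Edges

end Str14


namespace Str14
open Filter Topology

variable {V : Type} [DecidableEq V]

theorem mem_verts {G : EGraph V} {w : V} : w ∈ EGraph.verts G ↔ ∃ e ∈ G, w ∈ e.1 := by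
  unfold EGraph.verts
  exact Finset.mem_sup

theorem planar_to_PP {G : EGraph V} (h : EGraph.IsPlanar G) : PP (toSym G) := by
  obtain ⟨pos, arc, inj, hc, hends, inter, vert⟩ := h
  let L := Complex.equivRealProdCLM
  have hLc : Continuous L.symm := L.symm.continuous
  have hLi : Function.Injective L.symm := L.symm.injective
  let Γ : Sym2 V → Set ℂ := fun z => {y | ∃ e ∈ G, symE e = z ∧ y ∈ (L.symm ∘ arc e) '' Set.Icc 0 1}
  have hΓ : ∀ e ∈ G, Γ (symE e) = (L.symm ∘ arc e) '' Set.Icc 0 1 := by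
    intro e he
    ext y
    constructor
    · rintro ⟨f, hf, hfe, hy⟩
      rwa [symE_inj hfe] at hy
    · intro hy
      exact ⟨e, he, rfl, hy⟩
  refine poly (W := (EGraph.verts G : Set V)) (pos := L.symm ∘ pos) (Γ := Γ)
    (G.finite_toSet.image _) (Finset.finite_toSet _) ?_ ?_ ?_ ?_ ?_ ?_
  · rintro _ ⟨e, he, rfl⟩ w hw
    exact mem_verts.2 ⟨e, he, mem_symE.1 hw⟩
  · rintro u v ⟨e, he, h⟩
    exact symE_nd h
  · exact hLi.comp_injOn inj
  · rintro _ ⟨e, he, rfl⟩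
    obtain ⟨u, v, huv, h1, h2, h3⟩ := hends e he
    refine ⟨u, v, L.symm ∘ arc e, symE_eq h1, hLc.comp_continuousOn (hc e he).1, ?_, ?_, ?_⟩
    · simp [h2]
    · simp [h3]
    · exact (hΓ e he).symm
  · rintro _ ⟨e, he, rfl⟩ _ ⟨f, hf, rfl⟩ hef y hy hy'
    rw [hΓ e he] at hy
    rw [hΓ f hf] at hy'
    obtain ⟨s, hs, rfl⟩ := hy
    obtain ⟨t, ht, hst⟩ := hy'
    have hst : arc f t = arc e s := hLi hst
    obtain ⟨w, hw, hw'⟩ := inter e he f hf (fun h => hef (h ▸ rfl)) ⟨⟨s, hs, rfl⟩, ⟨t, ht, hst⟩⟩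
    have hw : w ∈ e.1 ∩ f.1 := hw
    rw [Finset.mem_inter] at hw
    exact ⟨w, mem_symE.2 hw.1, mem_symE.2 hw.2, congrArg L.symm hw'⟩
  · rintro _ ⟨e, he, rfl⟩ w hw hy
    rw [hΓ e he] at hy
    obtain ⟨s, hs, h⟩ := hy
    exact mem_symE.2 (vert e he w hw ⟨s, hs, hLi h⟩)

theorem PP_to_planar {G : EGraph V} (h : PP (toSym G)) : EGraph.IsPlanar G := by
  obtain ⟨W, pos, A, h⟩ := h
  have h := h.toVt
  let L := Complex.equivRealProdCLM
  have hLc : Continuous L := L.continuous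
  have hLi : Function.Injective L := L.injective
  have hG : ∀ e ∈ G, symE e ∈ toSym G := fun e he => ⟨e, he, rfl⟩
  have hvt : ∀ w ∈ EGraph.verts G, w ∈ vt (toSym G) := by
    intro w hw
    obtain ⟨e, he, hwe⟩ := mem_verts.1 hw
    exact ⟨symE e, hG e he, mem_symE.2 hwe⟩
  have hpar : ∀ e : {e : Finset V // e.card = 2}, ∃ f : ℝ → ℂ, e ∈ G → Continuous f ∧
      Set.InjOn f (Set.Icc 0 1) ∧
      (∃ u v : V, u ≠ v ∧ e.1 = ({u, v} : Finset V) ∧ f 0 = pos u ∧ f 1 = pos v) ∧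
      f '' Set.Icc 0 1 = A (symE e) := by
    intro e
    by_cases he : e ∈ G
    swap
    · exact ⟨fun _ => 0, fun h => absurd h he⟩
    obtain ⟨u, v, huv, h1⟩ := Finset.card_eq_two.1 e.2
    have hm := hG e he
    rw [symE_eq h1] at hm ⊢
    have hne : pos u ≠ pos v := fun hh =>
      huv (h.inj (h.sub _ hm u (by simp)) (h.sub _ hm v (by simp)) hh)
    obtain ⟨f, f1, f2, f3, f4, f5⟩ := (h.spl u v hm).param hne
    exact ⟨f, fun _ => ⟨f1, f2, ⟨u, v, huv, h1, f3, f4⟩, f5⟩⟩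
  choose f hf using hpar
  refine ⟨L ∘ pos, fun e => L ∘ f e, ?_, ?_, ?_, ?_, ?_⟩
  · exact hLi.comp_injOn (h.inj.mono hvt)
  · intro e he
    exact ⟨(hLc.comp (hf e he).1).continuousOn, hLi.comp_injOn (hf e he).2.1⟩
  · intro e he
    obtain ⟨u, v, h1, h2, h3, h4⟩ := (hf e he).2.2.1
    exact ⟨u, v, h1, h2, congrArg L h3, congrArg L h4⟩
  · rintro e he g hg heg _ ⟨⟨s, hs, rfl⟩, ⟨t, ht, hst⟩⟩
    have hst : f g t = f e s := hLi hst
    have m1 : f e s ∈ A (symE e) := by rw [← (hf e he).2.2.2]; exact ⟨s, hs, rfl⟩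
    have m2 : f e s ∈ A (symE g) := by rw [← (hf g hg).2.2.2]; exact ⟨t, ht, hst⟩
    obtain ⟨w, w1, w2, w3⟩ := h.inter _ (hG e he) _ (hG g hg) (fun hh => heg (symE_inj hh)) _ m1 m2
    exact ⟨w, Finset.mem_inter.2 ⟨mem_symE.1 w1, mem_symE.1 w2⟩, congrArg L w3⟩
  · rintro e he w hw ⟨s, hs, hsw⟩
    have hsw : f e s = pos w := hLi hsw
    refine mem_symE.1 (h.vert _ (hG e he) w (hvt w hw) ?_)
    rw [← (hf e he).2.2.2]; exact ⟨s, hs, hsw⟩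

theorem planar_iff {G : EGraph V} : EGraph.IsPlanar G ↔ PP (toSym G) := ⟨planar_to_PP, PP_to_planar⟩

theorem planar_mono {G H : EGraph V} (hGH : G ⊆ H) (h : EGraph.IsPlanar H) : EGraph.IsPlanar G :=
  planar_iff.2 ((planar_iff.1 h).mono (Set.image_mono hGH))

theorem separate [Infinite V] {G H : EGraph V} (hH : EGraph.IsPlanar H)
    (hF : ∀ F : EGraph V, (¬ EGraph.IsPlanar (G ∪ F) ↔ ¬ EGraph.IsPlanar (H ∪ F))) : G ⊆ H := by
  intro e he
  by_contra hne
  obtain ⟨u, v, huv, h1⟩ := Finset.card_eq_two.1 e.2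
  have hn : s(u, v) ∉ toSym H := by
    rw [← symE_eq h1]
    rintro ⟨f, hf, hfe⟩
    exact hne (symE_inj hfe ▸ hf)
  obtain ⟨E', hE, hP, hN⟩ := claim (planar_iff.1 hH) huv hn
  have hfin : (symE ⁻¹' E' : Set {e : Finset V // e.card = 2}).Finite :=
    (PP.finite hP).preimage symE_inj.injOn
  have hFm : ∀ f, f ∈ hfin.toFinset ↔ symE f ∈ E' := fun f => by simp
  have h2 : EGraph.IsPlanar (H ∪ hfin.toFinset) := by
    refine planar_iff.2 (hP.mono ?_)
    rintro _ ⟨f, hf, rfl⟩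
    rcases Finset.mem_union.1 hf with hf | hf
    · exact hE ⟨f, hf, rfl⟩
    · exact (hFm f).1 hf
  have h3 : EGraph.IsPlanar (G ∪ hfin.toFinset) := (not_iff_not.1 (hF hfin.toFinset)).2 h2
  refine hN ((planar_iff.1 h3).mono ?_)
  rintro z (rfl | hz)
  · exact ⟨e, Finset.mem_union_left _ he, symE_eq h1⟩
  · induction z using Sym2.inductionOn with
    | hf x y =>
      obtain ⟨f, hf⟩ := symE_surj (PP.nd hP hz)
      rw [← hf] at hz ⊢
      exact ⟨f, Finset.mem_union_right _ ((hFm f).2 hz), rfl⟩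

end Str14

/-- The property of non-planarity is strong. -/
theorem stmt14 {V : Type} [Countable V] [Infinite V] [DecidableEq V]
    (G H : EGraph V) :
    (∀ F : EGraph V, (¬ EGraph.IsPlanar (G ∪ F) ↔ ¬ EGraph.IsPlanar (H ∪ F))) ↔
      ((¬ EGraph.IsPlanar G ∧ ¬ EGraph.IsPlanar H) ∨ G = H) := by
  constructor
  · intro h
    by_cases hG : EGraph.IsPlanar G
    · right
      have h0 := h ∅
      rw [Finset.union_empty, Finset.union_empty] at h0
      have hH := (not_iff_not.1 h0).1 hG
      exact Finset.Subset.antisymm (Str14.separate hH h)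
        (Str14.separate hG fun F => (h F).symm)
    · left
      have h0 := h ∅
      rw [Finset.union_empty, Finset.union_empty] at h0
      exact ⟨hG, h0.1 hG⟩
  · rintro (⟨hG, hH⟩ | rfl) F
    · exact ⟨fun _ hh => hH (Str14.planar_mono Finset.subset_union_left hh),
        fun _ hh => hG (Str14.planar_mono Finset.subset_union_left hh)⟩
    · exact Iff.rfl
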